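/- arXiv:math/0508153 — 2 statements merged into one kernel-verified Lean document; each statement's English description precedes it below -/
import Mathlib

section
/- Let n ≥ 2. Deleting the first four letters gives a bijection from the set of reduced decompositions of w_0^B ∈ B_n whose first four letters are (0,1,0,1) onto R(w′), and likewise a bijection from the set of reduced decompositions of w_0^B whose first four letters are (1,0,1,0) onto R(w′). Consequently, the number of reduced decompositions of w_0^B beginning with (0,1,0,1) or (1,0,1,0) equals 2·|R(w′)|. -/
/-- The generator `sᵢ` of the hyperoctahedral group `Bₙ`, realized as a permutation of `ℤ`:
`s₀` swaps `1` and `-1`; for `i ≥ 1`, `sᵢ` swaps `i` with `i+1` and `-i` with `-(i+1)`,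
fixing all other integers. -/
def sB (i : ℕ) : Equiv.Perm ℤ :=
  if i = 0 then Equiv.swap 1 (-1)
  else Equiv.swap (i : ℤ) ((i : ℤ) + 1) * Equiv.swap (-(i : ℤ)) (-((i : ℤ) + 1))

/-- The product `s_{i₁} ⋯ s_{i_ℓ}` corresponding to the word `i₁ ⋯ i_ℓ`. -/
def wordProd (l : List ℕ) : Equiv.Perm ℤ := (l.map sB).prod

/-- The underlying function of the longest element `w₀ᴮ ∈ Bₙ`: `i ↦ -i` on `{-n, …, n}`,
fixing all other integers. -/
def w0BFun (n : ℕ) : ℤ → ℤ := fun i => if -(n : ℤ) ≤ i ∧ i ≤ (n : ℤ) then -i else i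

lemma w0BFun_involutive (n : ℕ) : Function.Involutive (w0BFun n) := by
  intro i
  unfold w0BFun
  split_ifs <;> omega

/-- The longest element `w₀ᴮ ∈ Bₙ`, as a permutation of `ℤ`. -/
def w0B (n : ℕ) : Equiv.Perm ℤ := (w0BFun_involutive n).toPerm

/-- `l` is a reduced decomposition of `w` in `Bₙ`: a word over the alphabet `{0, …, n-1}`
whose product of generators is `w`, of minimal length among all such words. -/
def IsReducedWord (n : ℕ) (w : Equiv.Perm ℤ) (l : List ℕ) : Prop :=
  (∀ i ∈ l, i < n) ∧ wordProd l = w ∧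
    ∀ l' : List ℕ, (∀ i ∈ l', i < n) → wordProd l' = w → l.length ≤ l'.length

/-- `R(w)`, the set of reduced decompositions of `w` in `Bₙ`. -/
def RSet (n : ℕ) (w : Equiv.Perm ℤ) : Set (List ℕ) := {l | IsReducedWord n w l}

/-- The length `ℓ(w)` of `w ∈ Bₙ`: the minimal length of a word over `{0, …, n-1}`
whose product of generators is `w`. -/
noncomputable def lenB (n : ℕ) (w : Equiv.Perm ℤ) : ℕ :=
  sInf {m : ℕ | ∃ l : List ℕ, (∀ i ∈ l, i < n) ∧ wordProd l = w ∧ l.length = m}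

/-- Whether a word begins with `k (k+1) k` or `(k+1) k (k+1)` for some `k ≥ 1`. -/
def isYB : List ℕ → Bool
  | a :: b :: c :: _ => (a != 0 && b == a + 1 && c == a) || (b != 0 && a == b + 1 && c == b + 1)
  | _ => false

/-- The number of Yang–Baxter moves in a word. -/
def ybCount (l : List ℕ) : ℕ :=
  ((Finset.range l.length).filter fun j => isYB (l.drop j) = true).card

/-- Whether a word begins with `0101` or `1010`. -/
def is01 : List ℕ → Bool
  | a :: b :: c :: d :: _ =>
      (a == 0 && b == 1 && c == 0 && d == 1) || (a == 1 && b == 0 && c == 1 && d == 0)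
  | _ => false

/-- The number of 01 moves in a word. -/
def m01Count (l : List ℕ) : ℕ :=
  ((Finset.range l.length).filter fun j => is01 (l.drop j) = true).card

/-- The underlying function of `w_k ∈ Bₙ`: `k ↦ -(k+2)`, `k+2 ↦ -k`, and `i ↦ -i` for all
other `i ∈ {1, …, n}`, extended by `w(-i) = -w(i)` and fixing all integers outside
`{-n, …, -1, 1, …, n}`. -/
def wkFun (n k : ℕ) : ℤ → ℤ := fun i =>
  if -(n : ℤ) ≤ i ∧ i ≤ (n : ℤ) then
    if i = (k : ℤ) then -((k : ℤ) + 2)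
    else if i = (k : ℤ) + 2 then -(k : ℤ)
    else if i = -(k : ℤ) then (k : ℤ) + 2
    else if i = -((k : ℤ) + 2) then (k : ℤ)
    else -i
  else i

/-- The underlying function of `w' ∈ Bₙ`: `1 ↦ 1`, `2 ↦ 2`, and `i ↦ -i` for `3 ≤ i ≤ n`,
extended by `w(-i) = -w(i)` and fixing all integers outside `{-n, …, -1, 1, …, n}`. -/
def wpFun (n : ℕ) : ℤ → ℤ := fun i =>
  if (-(n : ℤ) ≤ i ∧ i ≤ (n : ℤ)) ∧ (i < -2 ∨ 2 < i) then -i else i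

/-- `w`, viewed as a signed permutation of `{1, …, n}` via the values `w(1), …, w(n)`,
contains the signed pattern `p` (given by its list of values `p(1), …, p(m)`). -/
def ContainsPattern (n : ℕ) (w : ℤ → ℤ) (p : List ℤ) : Prop :=
  ∃ j : Fin p.length → ℤ, StrictMono j ∧ (∀ r, 1 ≤ j r ∧ j r ≤ (n : ℤ)) ∧
    (∀ r s, w (j r) < w (j s) ↔ p.get r < p.get s) ∧
    (∀ r, w (j r) < 0 ↔ p.get r < 0)

lemma aux_sB_apply (i : ℕ) (x : ℤ) : sB i x =
    if i = 0 then (if x = 1 then -1 else if x = -1 then 1 else x)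
    else if x = i then i + 1 else if x = i + 1 then i
    else if x = -i then -(i + 1) else if x = -(i + 1) then -i else x := by
  unfold sB
  by_cases h : i = 0
  · simp [h, Equiv.swap_apply_def]
  · simp only [h, if_false, Equiv.Perm.mul_apply, Equiv.swap_apply_def]
    split_ifs <;> omega

lemma aux_sB_odd (i : ℕ) (x : ℤ) : sB i (-x) = - sB i x := by
  simp only [aux_sB_apply]
  split_ifs <;> omega

lemma aux_cons (i : ℕ) (l : List ℕ) (x : ℤ) : wordProd (i :: l) x = sB i (wordProd l x) := by
  simp [wordProd]

lemma aux_append (l l' : List ℕ) : wordProd (l ++ l') = wordProd l * wordProd l' := by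
  simp [wordProd]

lemma aux_odd (l : List ℕ) (x : ℤ) : wordProd l (-x) = - wordProd l x := by
  induction l with
  | nil => simp [wordProd]
  | cons i l ih => rw [aux_cons, aux_cons, ih, aux_sB_odd]

/-- Indices of positive roots of type B. -/
noncomputable def auxH (n : ℕ) : Finset ((_ : ℕ) × ℤ) :=
  (Finset.range n).sigma (fun b => (Finset.Ico (-((b : ℤ) + 1)) ((b : ℤ) + 1)).erase 0)

lemma auxH_card (n : ℕ) : (auxH n).card = n ^ 2 := by
  unfold auxH
  rw [Finset.card_sigma]
  have : ∀ b : ℕ, ((Finset.Ico (-((b : ℤ) + 1)) ((b : ℤ) + 1)).erase 0).card = 2 * b + 1 := by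
    intro b
    rw [Finset.card_erase_of_mem (by simp), Int.card_Ico]
    omega
  simp only [this]
  induction n with
  | zero => simp
  | succ k ih => rw [Finset.sum_range_succ, ih]; ring

/-- The inversion set. -/
noncomputable def auxInv (n : ℕ) (w : Equiv.Perm ℤ) : Finset ((_ : ℕ) × ℤ) :=
  (auxH n).filter (fun p => w ((p.1 : ℤ) + 1) < w p.2)

lemma aux_step (i : ℕ) (u v : ℤ) (hu : u ≠ 0) (hv : v ≠ 0) (h : u < v)
    (h' : sB i v < sB i u) :
    (i ≠ 0 ∧ u = i ∧ v = i + 1) ∨ (i ≠ 0 ∧ u = -(i + 1) ∧ v = -i) ∨ (i = 0 ∧ u = -1 ∧ v = 1) := by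
  rw [aux_sB_apply, aux_sB_apply] at h'
  split_ifs at h' <;> omega

lemma aux_inv_le (n : ℕ) (l : List ℕ) : (auxInv n (wordProd l)).card ≤ l.length := by
  induction l with
  | nil =>
    simp only [List.length_nil, Nat.le_zero, Finset.card_eq_zero, auxInv, auxH]
    ext ⟨b, a⟩
    simp [wordProd]
    omega
  | cons i l ih =>
    have key : (auxInv n (wordProd (i :: l)) \ auxInv n (wordProd l)).card ≤ 1 := by
      rw [Finset.card_le_one]
      have hz : ∀ x, wordProd l x = 0 → x = 0 := by
        intro x hx
        have h0 : wordProd l 0 = 0 := by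
          have := aux_odd l 0
          simp only [neg_zero] at this
          omega
        exact (wordProd l).injective (hx.trans h0.symm)
      have main : ∀ p ∈ auxInv n (wordProd (i :: l)) \ auxInv n (wordProd l),
          (-((p.1 : ℤ) + 1) ≤ p.2 ∧ p.2 < (p.1 : ℤ) + 1) ∧
          ((i ≠ 0 ∧ wordProd l p.2 = i ∧ wordProd l ((p.1 : ℤ) + 1) = i + 1) ∨
          (i ≠ 0 ∧ wordProd l p.2 = -(i + 1) ∧ wordProd l ((p.1 : ℤ) + 1) = -i) ∨
          (i = 0 ∧ wordProd l p.2 = -1 ∧ wordProd l ((p.1 : ℤ) + 1) = 1)) := by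
        rintro ⟨b, a⟩ hp
        simp only [auxInv, auxH, Finset.mem_sdiff, Finset.mem_filter, Finset.mem_sigma,
          Finset.mem_range, Finset.mem_erase, Finset.mem_Ico, aux_cons, not_and, not_lt] at hp
        obtain ⟨⟨⟨hb, ha0, ha1, ha2⟩, h1⟩, h2⟩ := hp
        have h3 := h2 ⟨hb, ha0, ha1, ha2⟩
        have hne : wordProd l a ≠ wordProd l ((b : ℤ) + 1) := by
          intro h
          have := (wordProd l).injective h
          omega
        refine ⟨⟨ha1, ha2⟩, aux_step i _ _ (fun h => ha0 (hz _ h)) (fun h => ?_)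
          (lt_of_le_of_ne h3 hne) h1⟩
        have := hz _ h
        omega
      rintro ⟨b, a⟩ hp ⟨b', a'⟩ hp'
      obtain ⟨⟨r1, r2⟩, h⟩ := main _ hp
      obtain ⟨⟨r1', r2'⟩, h'⟩ := main _ hp'
      simp only at r1 r2 r1' r2' h h'
      have inj : ∀ x y, wordProd l x = wordProd l y → x = y := fun x y h =>
        (wordProd l).injective h
      have o1 := aux_odd l a
      have o2 := aux_odd l ((b : ℤ) + 1)
      have e1 := inj a a'
      have e2 := inj ((b : ℤ) + 1) ((b' : ℤ) + 1)
      have e3 := inj (-a) ((b' : ℤ) + 1)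
      have e4 := inj (-((b : ℤ) + 1)) a'
      have hab : a = -((b : ℤ) + 1) → wordProd l a = - wordProd l ((b : ℤ) + 1) := by
        intro h
        rw [h, o2]
      have : a = a' ∧ b = b' := by omega
      rw [this.1, this.2]
    have := Finset.card_le_card_sdiff_add_card (s := auxInv n (wordProd (i :: l)))
      (t := auxInv n (wordProd l))
    simp only [List.length_cons]
    omega

lemma aux_w0_inv (n : ℕ) : (auxInv n (w0B n)).card = n ^ 2 := by
  rw [← auxH_card n]
  congr 1
  apply Finset.filter_true_of_mem
  rintro ⟨b, a⟩ h
  simp only [auxH, Finset.mem_sigma, Finset.mem_range, Finset.mem_erase, Finset.mem_Ico] at h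
  change w0BFun n _ < w0BFun n _
  simp only [w0BFun]
  split_ifs <;> omega

lemma aux_w0_le (n : ℕ) (l : List ℕ) (h : wordProd l = w0B n) : n ^ 2 ≤ l.length := by
  rw [← aux_w0_inv n, ← h]
  exact aux_inv_le n l

lemma aux_neg (k : ℕ) : ∃ l : List ℕ, (∀ i ∈ l, i < k + 1) ∧ l.length = 2 * k + 1 ∧
    ∀ x : ℤ, wordProd l x = if x = k + 1 ∨ x = -(k + 1) then -x else x := by
  induction k with
  | zero =>
    refine ⟨[0], by simp, by simp, fun x => ?_⟩
    rw [aux_cons, aux_sB_apply]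
    simp only [wordProd, List.map_nil, List.prod_nil, Equiv.Perm.one_apply]
    split_ifs <;> omega
  | succ k ih =>
    obtain ⟨l, h1, h2, h3⟩ := ih
    refine ⟨(k + 1) :: (l ++ [k + 1]), ?_, ?_, fun x => ?_⟩
    · intro i hi
      simp only [List.mem_cons, List.mem_append, List.not_mem_nil, or_false] at hi
      rcases hi with hi | hi | hi
      · omega
      · have := h1 i hi
        omega
      · omega
    · simp
      omega
    · rw [aux_cons, aux_append, Equiv.Perm.mul_apply, aux_cons, h3]
      simp only [wordProd, List.map_nil, List.prod_nil, Equiv.Perm.one_apply]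
      have hy := aux_sB_apply (k + 1) x
      generalize sB (k + 1) x = y at hy
      rw [aux_sB_apply]
      rw [if_neg (Nat.succ_ne_zero k)] at *
      push_cast at *
      split_ifs at hy <;> subst hy <;> split_ifs <;> omega

lemma aux_wp (m : ℕ) : ∃ l : List ℕ, (∀ i ∈ l, i < m + 2) ∧ l.length + 4 = (m + 2) ^ 2 ∧
    ∀ x : ℤ, wordProd l x = wpFun (m + 2) x := by
  induction m with
  | zero =>
    refine ⟨[], by simp, by simp, fun x => ?_⟩
    simp only [wordProd, List.map_nil, List.prod_nil, Equiv.Perm.one_apply, wpFun]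
    split_ifs <;> omega
  | succ m ih =>
    obtain ⟨l, h1, h2, h3⟩ := ih
    obtain ⟨t, t1, t2, t3⟩ := aux_neg (m + 2)
    refine ⟨t ++ l, ?_, ?_, fun x => ?_⟩
    · intro i hi
      rcases List.mem_append.1 hi with hi | hi
      · have := t1 i hi
        omega
      · have := h1 i hi
        omega
    · rw [List.length_append, t2, add_assoc, h2]
      ring
    · rw [aux_append, Equiv.Perm.mul_apply, t3, h3]
      simp only [wpFun]
      push_cast
      split_ifs <;> omega

lemma aux_0101 (x : ℤ) : wordProd [0, 1, 0, 1] x = if -2 ≤ x ∧ x ≤ 2 then -x else x := by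
  simp only [aux_cons]
  simp only [wordProd, List.map_nil, List.prod_nil, Equiv.Perm.one_apply]
  by_cases h : -2 ≤ x ∧ x ≤ 2
  · have : x = -2 ∨ x = -1 ∨ x = 0 ∨ x = 1 ∨ x = 2 := by omega
    rcases this with rfl | rfl | rfl | rfl | rfl <;> simp [aux_sB_apply]
  · have a0 : sB 0 x = x := by rw [aux_sB_apply]; split_ifs <;> omega
    have a1 : sB 1 x = x := by rw [aux_sB_apply]; push_cast; split_ifs <;> omega
    simp only [a0, a1, h, if_false]

lemma aux_1010 (x : ℤ) : wordProd [1, 0, 1, 0] x = if -2 ≤ x ∧ x ≤ 2 then -x else x := by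
  simp only [aux_cons]
  simp only [wordProd, List.map_nil, List.prod_nil, Equiv.Perm.one_apply]
  by_cases h : -2 ≤ x ∧ x ≤ 2
  · have : x = -2 ∨ x = -1 ∨ x = 0 ∨ x = 1 ∨ x = 2 := by omega
    rcases this with rfl | rfl | rfl | rfl | rfl <;> simp [aux_sB_apply]
  · have a0 : sB 0 x = x := by rw [aux_sB_apply]; split_ifs <;> omega
    have a1 : sB 1 x = x := by rw [aux_sB_apply]; push_cast; split_ifs <;> omega
    simp only [a0, a1, h, if_false]

lemma aux_iff (n : ℕ) (hn : 2 ≤ n) (w : Equiv.Perm ℤ) (hw : ∀ i : ℤ, w i = wpFun n i)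
    (p : List ℕ) (hp : ∀ i ∈ p, i < n) (hl : p.length = 4)
    (hq : ∀ x : ℤ, wordProd p x = if -2 ≤ x ∧ x ≤ 2 then -x else x) (l : List ℕ) :
    IsReducedWord n (w0B n) (p ++ l) ↔ IsReducedWord n w l := by
  have hmul : wordProd p * w = w0B n := by
    ext x
    rw [Equiv.Perm.mul_apply, hw, hq]
    change _ = w0BFun n x
    simp only [wpFun, w0BFun]
    split_ifs <;> omega
  have hprod : ∀ l', wordProd (p ++ l') = w0B n ↔ wordProd l' = w := by
    intro l'
    rw [aux_append, ← hmul]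
    exact mul_right_inj _
  have hlet : ∀ l' : List ℕ, (∀ i ∈ p ++ l', i < n) ↔ ∀ i ∈ l', i < n := by
    intro l'
    constructor
    · intro h i hi
      exact h i (List.mem_append_right _ hi)
    · intro h i hi
      rcases List.mem_append.1 hi with hi | hi
      · exact hp i hi
      · exact h i hi
  constructor
  · rintro ⟨h1, h2, h3⟩
    refine ⟨(hlet l).1 h1, (hprod l).1 h2, fun l' a b => ?_⟩
    have := h3 (p ++ l') ((hlet l').2 a) ((hprod l').2 b)
    simp only [List.length_append] at this
    omega
  · rintro ⟨h1, h2, h3⟩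
    refine ⟨(hlet l).2 h1, (hprod l).2 h2, fun l' a b => ?_⟩
    have e1 := aux_w0_le n l' b
    obtain ⟨m, rfl⟩ : ∃ m, n = m + 2 := ⟨n - 2, by omega⟩
    obtain ⟨t, t1, t2, t3⟩ := aux_wp m
    have := h3 t t1 (Equiv.ext fun x => by rw [t3, hw])
    simp only [List.length_append]
    omega

lemma aux_bij (n : ℕ) (hn : 2 ≤ n) (w : Equiv.Perm ℤ) (hw : ∀ i : ℤ, w i = wpFun n i)
    (p : List ℕ) (hp : ∀ i ∈ p, i < n) (hl : p.length = 4)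
    (hq : ∀ x : ℤ, wordProd p x = if -2 ≤ x ∧ x ≤ 2 then -x else x) :
    Set.BijOn (fun l => l.drop 4)
      {l : List ℕ | IsReducedWord n (w0B n) l ∧ l.take 4 = p} (RSet n w) := by
  have hi := aux_iff n hn w hw p hp hl hq
  refine ⟨?_, ?_, ?_⟩
  · rintro l ⟨h, ht⟩
    refine (hi _).1 ?_
    rw [← ht, List.take_append_drop]
    exact h
  · rintro l ⟨_, ht⟩ l' ⟨_, ht'⟩ he
    simp only at he
    rw [← List.take_append_drop 4 l, ← List.take_append_drop 4 l', ht, ht', he]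
  · intro l h
    exact ⟨p ++ l, ⟨(hi l).2 h, by rw [← hl]; simp⟩, by simp only [← hl]; simp⟩

/-- Let `n ≥ 2` and let `w = w' ∈ Bₙ`.  Deleting the first four letters is a bijection
from the reduced decompositions of `w₀ᴮ` starting with `(0,1,0,1)` onto `R(w')`, and
likewise for those starting with `(1,0,1,0)`; consequently the number of reduced
decompositions of `w₀ᴮ` starting with one of these two factors is `2 · |R(w')|`. -/
theorem drop_four_bijection (n : ℕ) (hn : 2 ≤ n)
    (w : Equiv.Perm ℤ) (hw : ∀ i : ℤ, w i = wpFun n i) :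
    Set.BijOn (fun l => l.drop 4)
      {l : List ℕ | IsReducedWord n (w0B n) l ∧ l.take 4 = [0, 1, 0, 1]}
      (RSet n w) ∧
    Set.BijOn (fun l => l.drop 4)
      {l : List ℕ | IsReducedWord n (w0B n) l ∧ l.take 4 = [1, 0, 1, 0]}
      (RSet n w) ∧
    Nat.card {l : List ℕ // IsReducedWord n (w0B n) l ∧
        (l.take 4 = [0, 1, 0, 1] ∨ l.take 4 = [1, 0, 1, 0])}
      = 2 * Nat.card ↥(RSet n w) := by
  have hp1 : ∀ i ∈ [0, 1, 0, 1], i < n := by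
    intro i hi
    simp at hi
    omega
  have hp2 : ∀ i ∈ [1, 0, 1, 0], i < n := by
    intro i hi
    simp at hi
    omega
  refine ⟨aux_bij n hn w hw _ hp1 rfl aux_0101, aux_bij n hn w hw _ hp2 rfl aux_1010, ?_⟩
  have i1 := aux_iff n hn w hw _ hp1 rfl aux_0101
  have i2 := aux_iff n hn w hw _ hp2 rfl aux_1010
  have hb : Nat.card Bool = 2 := by simp
  rw [← hb, ← Nat.card_prod]
  symm
  refine Nat.card_eq_of_bijective (fun q : Bool × ↥(RSet n w) =>
    ⟨(if q.1 then [0, 1, 0, 1] else [1, 0, 1, 0]) ++ q.2.1, ?_⟩) ⟨?_, ?_⟩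
  · obtain ⟨b, l, hl⟩ := q
    cases b
    · exact ⟨(i2 l).2 hl, by simp⟩
    · exact ⟨(i1 l).2 hl, by simp⟩
  · rintro ⟨b, l, hl⟩ ⟨b', l', hl'⟩ h
    cases b <;> cases b' <;> simp at h ⊢ <;> exact h
  · rintro ⟨l, h, ht | ht⟩
    · have e : [0, 1, 0, 1] ++ l.drop 4 = l := by rw [← ht, List.take_append_drop]
      exact ⟨(true, ⟨l.drop 4, (i1 _).1 (by rw [e]; exact h)⟩), Subtype.ext e⟩
    · have e : [1, 0, 1, 0] ++ l.drop 4 = l := by rw [← ht, List.take_append_drop]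
      exact ⟨(false, ⟨l.drop 4, (i2 _).1 (by rw [e]; exact h)⟩), Subtype.ext e⟩
end

section
/- For every integer n ≥ 3, n(n² − 2) · Σ_{k=1}^{n−2} |R(w_k)| = (n − 2) · |R(w_0^B)|. -/
open Finset

/-- smaller endpoint of the pair swapped by `sB k` -/
def loB (k : ℕ) : ℤ := if k = 0 then -1 else (k : ℤ)

/-- reflection exchanging positions `i` and `j` (and `-i`, `-j`) -/
def trB (i j : ℤ) : Equiv.Perm ℤ :=
  if i = 0 ∨ j = 0 then 1 else if i = -j then Equiv.swap i j else Equiv.swap i j * Equiv.swap (-i) (-j)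

lemma trB_apply (i j x : ℤ) : trB i j x =
    if i = 0 ∨ j = 0 then x else if x = i then j else if x = j then i else
    if x = -i then -j else if x = -j then -i else x := by
  unfold trB
  split_ifs <;> simp only [Equiv.Perm.mul_apply, Equiv.swap_apply_def, Equiv.Perm.one_apply] <;> split_ifs <;> omega

lemma loB_cases (k : ℕ) : (k = 0 ∧ loB k = -1) ∨ (0 < k ∧ loB k = k) := by
  unfold loB; split_ifs <;> omega

lemma sB_eq_trB (k : ℕ) : sB k = trB (loB k) (k + 1) := by
  ext x
  rw [trB_apply, if_neg (by have := loB_cases k; omega)]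
  unfold sB loB
  by_cases h : k = 0
  · subst h
    simp only [if_true, Equiv.swap_apply_def]
    split_ifs <;> simp_all
  · simp only [h, if_false, Equiv.Perm.mul_apply, Equiv.swap_apply_def]
    split_ifs <;> omega

lemma sB_apply (k : ℕ) (x : ℤ) : sB k x =
    if x = loB k then (k : ℤ) + 1 else if x = k + 1 then loB k
    else if x = -loB k then -((k : ℤ) + 1) else if x = -((k : ℤ) + 1) then -loB k else x := by
  rw [sB_eq_trB, trB_apply, if_neg (by have := loB_cases k; omega)]

lemma sB_sB (k : ℕ) (x : ℤ) : sB k (sB k x) = x := by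
  have := loB_cases k
  simp only [sB_apply]; split_ifs <;> omega

lemma sB_mul_self (k : ℕ) : sB k * sB k = 1 := by
  ext x; simp [sB_sB]

lemma sB_mul_cancel (k : ℕ) (w : Equiv.Perm ℤ) : sB k * (sB k * w) = w := by
  rw [← mul_assoc, sB_mul_self, one_mul]

lemma sB_neg (k : ℕ) (x : ℤ) : sB k (-x) = -sB k x := by
  have := loB_cases k
  simp only [sB_apply]; split_ifs <;> omega

lemma sB_mono (k : ℕ) {x y : ℤ} (hx : x ≠ 0) (hy : y ≠ 0) (h : sB k x ≠ y) :
    sB k x < sB k y ↔ x < y := by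
  have := loB_cases k
  rw [sB_apply] at h
  simp only [sB_apply]; split_ifs at * <;> omega

/-- membership in `B_N` -/
def InB (N : ℕ) (w : Equiv.Perm ℤ) : Prop :=
  (∀ x, w (-x) = -w x) ∧ ∀ x : ℤ, (N : ℤ) < x → w x = x

namespace InB

variable {N : ℕ} {w u : Equiv.Perm ℤ}

lemma one : InB N 1 := ⟨fun _ => rfl, fun _ _ => rfl⟩

lemma mul (hw : InB N w) (hu : InB N u) : InB N (w * u) := by
  refine ⟨fun x => ?_, fun x hx => ?_⟩
  · simp [hw.1, hu.1]
  · simp [hu.2 x hx, hw.2 x hx]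

lemma inv (hw : InB N w) : InB N w⁻¹ := by
  refine ⟨fun x => ?_, fun x hx => ?_⟩
  · rw [Equiv.Perm.inv_eq_iff_eq, hw.1]; simp
  · rw [Equiv.Perm.inv_eq_iff_eq, hw.2 x hx]

lemma zero (hw : InB N w) : w 0 = 0 := by
  have := hw.1 0; simp at this; omega

lemma ne_zero (hw : InB N w) {x : ℤ} (hx : x ≠ 0) : w x ≠ 0 := by
  intro h; apply hx; apply w.injective; rw [h, hw.zero]

lemma fix (hw : InB N w) {x : ℤ} (hx : (N : ℤ) < |x|) : w x = x := by
  rcases abs_cases x with ⟨h, _⟩ | ⟨h, _⟩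
  · exact hw.2 x (by omega)
  · have h1 := hw.2 (-x) (by omega)
    rw [hw.1] at h1; omega

lemma abs_le (hw : InB N w) {x : ℤ} (hx : |x| ≤ N) : |w x| ≤ N := by
  by_contra h
  push Not at h
  have h1 := hw.fix h
  have := w.injective h1
  rw [this] at h; omega

lemma mono {M : ℕ} (hw : InB N w) (h : N ≤ M) : InB M w :=
  ⟨hw.1, fun x hx => hw.2 x (by omega)⟩

lemma sB {k : ℕ} (hk : k < N) : InB N (sB k) := by
  refine ⟨sB_neg k, fun x hx => ?_⟩
  have := loB_cases k
  rw [sB_apply]; split_ifs <;> omega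

lemma trB {i j : ℤ} (hi : |i| ≤ N) (hj : |j| ≤ N) : InB N (trB i j) := by
  rw [_root_.abs_le] at hi hj
  refine ⟨fun x => ?_, fun x hx => ?_⟩
  · simp only [trB_apply]; split_ifs <;> omega
  · simp only [trB_apply]; split_ifs <;> omega

end InB

lemma mul_trB {w : Equiv.Perm ℤ} (hw : ∀ x, w (-x) = -w x) (i j : ℤ) :
    w * trB i j = trB (w i) (w j) * w := by
  ext x
  have h0 : w 0 = 0 := by have := hw 0; simp at this; omega
  have hz : ∀ y, w y = 0 ↔ y = 0 := fun y =>
    ⟨fun h => w.injective (h.trans h0.symm), fun h => by rw [h, h0]⟩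
  simp only [Equiv.Perm.mul_apply, trB_apply, ← hw, w.injective.eq_iff, hz]
  split_ifs <;> rfl

lemma trB_sB {k : ℕ} {x : ℤ} (h : sB k x ≠ x) : trB x (sB k x) = sB k := by
  have := loB_cases k
  ext y
  rw [trB_apply]
  rw [sB_apply] at h
  simp only [sB_apply]; split_ifs at * <;> omega

lemma mul_trB_eq_sB_mul {w : Equiv.Perm ℤ} (hw : ∀ x, w (-x) = -w x) {i j : ℤ} {k : ℕ}
    (h : sB k (w i) = w j) (hij : i ≠ j) : w * trB i j = sB k * w := by
  rw [mul_trB hw, ← h, trB_sB]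
  rw [h]; exact fun h' => hij (w.injective h').symm

lemma trB_comm (i j : ℤ) : trB i j = trB j i := by
  ext x; simp only [trB_apply]; split_ifs <;> omega

lemma trB_mul_self (i j : ℤ) : trB i j * trB i j = 1 := by
  ext x; simp only [Equiv.Perm.mul_apply, trB_apply, Equiv.Perm.one_apply]; split_ifs <;> omega

/-- box of positive roots -/
noncomputable def boxB (N : ℕ) : Finset (ℤ × ℤ) :=
  (Icc (-(N : ℤ)) N ×ˢ Icc (1 : ℤ) N).filter fun p => p.1 ≠ 0 ∧ -p.2 ≤ p.1 ∧ p.1 < p.2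

/-- length function -/
noncomputable def ellB (N : ℕ) (w : Equiv.Perm ℤ) : ℕ := ((boxB N).filter fun p => w p.2 < w p.1).card

lemma mem_boxB {N : ℕ} {p : ℤ × ℤ} : p ∈ boxB N ↔ p.2 ≤ N ∧ p.1 ≠ 0 ∧ -p.2 ≤ p.1 ∧ p.1 < p.2 := by
  unfold boxB
  simp only [mem_filter, mem_product, mem_Icc]
  constructor
  · rintro ⟨_, h⟩; omega
  · rintro h; omega

lemma ellB_desc {N : ℕ} {w : Equiv.Perm ℤ} (hw : InB N w) {k : ℕ} (hk : k < N)
    (h : w⁻¹ (k + 1) < w⁻¹ (loB k)) : ellB N (sB k * w) + 1 = ellB N w := by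
  obtain ⟨i, hi⟩ : ∃ i, w⁻¹ (k + 1) = i := ⟨_, rfl⟩
  obtain ⟨j, hj⟩ : ∃ j, w⁻¹ (loB k) = j := ⟨_, rfl⟩
  have hlo := loB_cases k
  have wi : w i = k + 1 := by rw [← hi]; simp
  have wj : w j = loB k := by rw [← hj]; simp
  rw [hi, hj] at h
  have hi0 : i ≠ 0 := by rintro rfl; rw [hw.zero] at wi; omega
  have hj0 : j ≠ 0 := by rintro rfl; rw [hw.zero] at wj; omega
  have hiN : |i| ≤ N := by
    rw [← hi]; apply hw.inv.abs_le; rw [abs_le]; omega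
  have hjN : |j| ≤ N := by
    rw [← hj]; apply hw.inv.abs_le; rw [abs_le]; omega
  rw [abs_le] at hiN hjN
  have wni : w (-i) = -(k + 1) := by rw [hw.1, wi]
  have wnj : w (-j) = -loB k := by rw [hw.1, wj]
  -- the distinguished root
  obtain ⟨p, hp⟩ : ∃ p : ℤ × ℤ, p = if -j ≤ i then (i, j) else (-j, -i) := ⟨_, rfl⟩
  have hpb : p ∈ boxB N := by
    rw [mem_boxB, hp]; split_ifs <;> simp <;> omega
  have hpw : w p.2 < w p.1 := by
    rw [hp]; split_ifs <;> simp [wi, wj, wni, wnj] <;> omega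
  have hps : ¬ sB k (w p.2) < sB k (w p.1) := by
    rw [hp]; split_ifs <;> simp only [wi, wj, wni, wnj, sB_apply] <;> split_ifs <;> omega
  have key : ∀ q ∈ boxB N, q ≠ p → (sB k (w q.2) < sB k (w q.1) ↔ w q.2 < w q.1) := by
    rintro ⟨a, b⟩ hq hqp
    rw [mem_boxB] at hq
    simp only at hq ⊢
    by_cases hs : sB k (w b) = w a
    · exfalso; apply hqp
      have hab : w a ≠ w b := fun h' => by have := w.injective h'; omega
      have hb : b = i ∨ b = j ∨ b = -i ∨ b = -j := by
        have : w b = w i ∨ w b = w j ∨ w b = w (-i) ∨ w b = w (-j) := by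
          rw [wi, wj, wni, wnj]
          rw [← hs, sB_apply] at hab
          by_contra hcon
          push Not at hcon
          apply hab; split_ifs <;> omega
        simpa only [w.injective.eq_iff] using this
      have ha : a = w⁻¹ (sB k (w b)) := by rw [hs]; simp
      have hni : w⁻¹ (-(k+1)) = -i := by rw [Equiv.Perm.inv_eq_iff_eq, wni]
      have hnj : w⁻¹ (-loB k) = -j := by rw [Equiv.Perm.inv_eq_iff_eq, wnj]
      have e1 : sB k (k+1) = loB k := by rw [sB_apply]; split_ifs <;> omega
      have e2 : sB k (loB k) = k+1 := by rw [sB_apply]; split_ifs <;> omega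
      rcases hb with rfl | rfl | rfl | rfl
      · rw [wi, e1, hj] at ha; omega
      · rw [wj, e2, hi] at ha
        rw [hp, if_pos (by omega), ha]
      · rw [wni, sB_neg, e1, hnj] at ha
        rw [hp, ha]
        split_ifs with h3
        · have : i = -j := by omega
          rw [this]; simp
        · rfl
      · rw [wnj, sB_neg, e2, hni] at ha; omega
    · exact sB_mono k (hw.ne_zero (by omega)) (hw.ne_zero (by omega)) hs
  unfold ellB
  have : (boxB N).filter (fun q => w q.2 < w q.1) =
      insert p ((boxB N).filter fun q => (sB k * w) q.2 < (sB k * w) q.1) := by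
    ext q
    rw [mem_filter, mem_insert, mem_filter]
    by_cases hq : q = p
    · subst hq; simp [hpb, hpw]
    · constructor
      · rintro ⟨h1, h2⟩; exact Or.inr ⟨h1, (key q h1 hq).2 h2⟩
      · rintro (h1 | ⟨h1, h2⟩)
        · exact absurd h1 hq
        · exact ⟨h1, (key q h1 hq).1 h2⟩
  rw [this, card_insert_of_notMem]
  rw [mem_filter]
  exact fun h => hps h.2

lemma ellB_asc {N : ℕ} {w : Equiv.Perm ℤ} (hw : InB N w) {k : ℕ} (hk : k < N)
    (h : w⁻¹ (loB k) < w⁻¹ (k + 1)) : ellB N (sB k * w) = ellB N w + 1 := by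
  have h1 := ellB_desc ((InB.sB hk).mul hw) hk (w := sB k * w) (by
    have hlo := loB_cases k
    have hs : (sB k)⁻¹ = sB k := inv_eq_of_mul_eq_one_left (sB_mul_self k)
    have e1 : sB k (k+1) = loB k := by rw [sB_apply]; split_ifs <;> omega
    have e2 : sB k (loB k) = k+1 := by rw [sB_apply]; split_ifs <;> omega
    rw [mul_inv_rev, hs, Equiv.Perm.mul_apply, Equiv.Perm.mul_apply, e1, e2]
    exact h)
  rw [sB_mul_cancel] at h1
  exact h1.symm

lemma lo_ne (k : ℕ) (w : Equiv.Perm ℤ) : w⁻¹ (loB k) ≠ w⁻¹ (k + 1) := by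
  intro h
  have := (w⁻¹).injective h
  have hlo := loB_cases k
  omega

lemma ellB_sB {N : ℕ} {w : Equiv.Perm ℤ} (hw : InB N w) {k : ℕ} (hk : k < N) :
    (w⁻¹ (k + 1) < w⁻¹ (loB k) ∧ ellB N (sB k * w) + 1 = ellB N w) ∨
    (w⁻¹ (loB k) < w⁻¹ (k + 1) ∧ ellB N (sB k * w) = ellB N w + 1) := by
  rcases lt_or_gt_of_ne (lo_ne k w) with h | h
  · exact Or.inr ⟨h, ellB_asc hw hk h⟩
  · exact Or.inl ⟨h, ellB_desc hw hk h⟩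

lemma ellB_one (N : ℕ) : ellB N 1 = 0 := by
  unfold ellB
  rw [card_eq_zero, filter_eq_empty_iff]
  intro p hp
  rw [mem_boxB] at hp
  simp; omega

lemma exists_desc {N : ℕ} {w : Equiv.Perm ℤ} (hw : InB N w) (h : ellB N w ≠ 0) :
    ∃ k < N, w⁻¹ (k + 1) < w⁻¹ (loB k) := by
  by_contra hcon
  push Not at hcon
  apply h
  have hv := hw.inv
  have hpos : ∀ a : ℕ, a < N → 0 < w⁻¹ (a + 1) := by
    intro a
    induction a with
    | zero =>
      intro h0
      have h1 := hcon 0 h0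
      have h2 := lo_ne 0 w
      simp [loB, hv.1] at h1 h2 ⊢
      omega
    | succ a ih =>
      intro h0
      have h1 := hcon (a+1) h0
      have := ih (by omega)
      simp [loB] at h1 this ⊢
      omega
  have hmono : ∀ b : ℕ, ∀ a : ℕ, a < b → b < N → w⁻¹ (a + 1) < w⁻¹ (b + 1) := by
    intro b
    induction b with
    | zero => intro a ha; omega
    | succ b ih =>
      intro a ha hb
      have h1 := hcon (b+1) hb
      have h2 := lo_ne (b+1) w
      simp only [loB, Nat.succ_ne_zero, if_false] at h1 h2
      push_cast at h1 h2
      have h3 : w⁻¹ ((b:ℤ) + 1) < w⁻¹ (((b+1:ℕ):ℤ) + 1) := by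
        push_cast; omega
      rcases Nat.lt_succ_iff_lt_or_eq.1 ha with h4 | rfl
      · exact (ih a h4 (by omega)).trans h3
      · exact h3
  have hmono' : ∀ a b : ℤ, 0 < a → a < b → b ≤ N → w⁻¹ a < w⁻¹ b := by
    intro a b ha hab hb
    have := hmono (b-1).toNat (a-1).toNat (by omega) (by omega)
    rwa [Int.toNat_of_nonneg (by omega), Int.toNat_of_nonneg (by omega), sub_add_cancel,
      sub_add_cancel] at this
  have hpos' : ∀ a : ℤ, 0 < a → a ≤ N → 0 < w⁻¹ a := by
    intro a ha hb
    have := hpos (a-1).toNat (by omega)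
    rwa [Int.toNat_of_nonneg (by omega), sub_add_cancel] at this
  unfold ellB
  rw [card_eq_zero, filter_eq_empty_iff]
  rintro ⟨i, j⟩ hp hlt
  rw [mem_boxB] at hp
  simp only at hp hlt
  have hi : |w i| ≤ N := hw.abs_le (by rw [abs_le]; omega)
  have hj : |w j| ≤ N := hw.abs_le (by rw [abs_le]; omega)
  rw [abs_le] at hi hj
  have hi0 := hw.ne_zero (x := i) (by omega)
  have hj0 := hw.ne_zero (x := j) (by omega)
  have ei : w⁻¹ (w i) = i := by simp
  have ej : w⁻¹ (w j) = j := by simp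
  have hni : w⁻¹ (-w i) = -i := by rw [hv.1, ei]
  have hnj : w⁻¹ (-w j) = -j := by rw [hv.1, ej]
  rcases lt_or_gt_of_ne hi0 with h1 | h1 <;> rcases lt_or_gt_of_ne hj0 with h2 | h2
  · have := hmono' (-w i) (-w j) (by omega) (by omega) (by omega); omega
  · omega
  · have := hpos' (w i) (by omega) (by omega)
    have := hpos' (-w j) (by omega) (by omega)
    omega
  · have := hmono' (w j) (w i) (by omega) (by omega) (by omega); omega

lemma eq_one_of_ellB {N : ℕ} {w : Equiv.Perm ℤ} (hw : InB N w) (h : ellB N w = 0) : w = 1 := by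
  unfold ellB at h
  rw [card_eq_zero, filter_eq_empty_iff] at h
  have hinc : ∀ i j : ℤ, i ≠ 0 → j ≤ N → -j ≤ i → i < j → w i < w j := by
    intro i j hi hj h1 h2
    have := h (mem_boxB.2 (show (i, j).2 ≤ N ∧ _ by simp; omega))
    simp at this
    exact lt_of_le_of_ne this (fun h' => by have := w.injective h'; omega)
  have hle : ∀ a : ℕ, a < N → (a : ℤ) + 1 ≤ w (a + 1) := by
    intro a
    induction a with
    | zero =>
      intro h0
      have := hinc (-1) 1 (by omega) (by omega) (by omega) (by omega)
      rw [hw.1] at this; simp; omega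
    | succ a ih =>
      intro h0
      have := hinc (a+1) (a+1+1) (by omega) (by omega) (by omega) (by omega)
      have := ih (by omega)
      push_cast; omega
  have hge : ∀ a : ℕ, a < N → w (N - a) ≤ N - a := by
    intro a
    induction a with
    | zero =>
      intro h0
      have := hw.abs_le (x := N) (by simp)
      rw [abs_le] at this; simp; omega
    | succ a ih =>
      intro h0
      have := hinc (N - (a+1)) (N - a) (by omega) (by omega) (by omega) (by omega)
      have := ih (by omega)
      push_cast; omega
  have hpos : ∀ x : ℤ, 0 < x → w x = x := by
    intro x hx
    by_cases hxN : (N : ℤ) < x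
    · exact hw.2 x hxN
    · have h1 := hle (x-1).toNat (by omega)
      have h2 := hge (N-x).toNat (by omega)
      rw [Int.toNat_of_nonneg (by omega)] at h1 h2
      rw [show (N:ℤ) - (N - x) = x by ring] at h2
      rw [show x - 1 + 1 = x by ring] at h1
      omega
  ext x
  rw [Equiv.Perm.one_apply]
  rcases lt_trichotomy x 0 with h1 | h1 | h1
  · have := hpos (-x) (by omega)
    rw [hw.1] at this; omega
  · rw [h1, hw.zero]
  · exact hpos x h1

/-- exchange: multiplying by a reflection at an inversion lowers the length -/
lemma ellB_trB_lt {N : ℕ} : ∀ (L : ℕ) {w : Equiv.Perm ℤ}, InB N w → ellB N w = L →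
    ∀ {i j : ℤ}, i ≠ 0 → j ≠ 0 → |i| ≤ N → |j| ≤ N → i < j → w j < w i →
    ellB N (w * trB i j) < ellB N w := by
  intro L
  induction L with
  | zero =>
    intro w hw h i j hi0 hj0 hi hj hij hlt
    rw [eq_one_of_ellB hw h] at hlt
    simp at hlt; omega
  | succ L ih =>
    intro w hw h i j hi0 hj0 hi hj hij hlt
    obtain ⟨k, hk, hd⟩ := exists_desc hw (by omega)
    have hu : InB N (sB k * w) := (InB.sB hk).mul hw
    have hl := ellB_desc hw hk hd
    by_cases hs : sB k (w i) = w j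
    · rw [mul_trB_eq_sB_mul hw.1 hs (by omega)]; omega
    · have hs' : sB k (w j) ≠ w i := by
        intro h'; apply hs; rw [← h', sB_sB]
      have h1 := (sB_mono k (hw.ne_zero hj0) (hw.ne_zero hi0) hs').2 hlt
      have h2 := ih hu (by omega) hi0 hj0 hi hj hij h1
      have h3 : InB N (sB k * w * trB i j) := hu.mul (InB.trB hi hj)
      have h4 := ellB_sB h3 hk
      have h5 : sB k * (sB k * w * trB i j) = w * trB i j := by
        rw [mul_assoc, sB_mul_cancel]
      rw [h5] at h4
      omega

lemma ellB_trB_gt {N : ℕ} {w : Equiv.Perm ℤ} (hw : InB N w) {i j : ℤ} (hi0 : i ≠ 0) (hj0 : j ≠ 0)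
    (hi : |i| ≤ N) (hj : |j| ≤ N) (hij : i < j) (hlt : w i < w j) :
    ellB N w < ellB N (w * trB i j) := by
  have h1 := ellB_trB_lt _ (hw.mul (InB.trB hi hj)) rfl hi0 hj0 hi hj hij (by
    simp only [Equiv.Perm.mul_apply, trB_apply]
    split_ifs <;> omega)
  rwa [mul_assoc, trB_mul_self, mul_one] at h1

lemma ellB_between {N : ℕ} {w : Equiv.Perm ℤ} (hw : InB N w) {i j p : ℤ} (hi0 : i ≠ 0)
    (hj0 : j ≠ 0) (hp0 : p ≠ 0) (hi : |i| ≤ N) (hj : |j| ≤ N) (hip : i < p) (hpj : p < j)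
    (h1 : w i < w p) (h2 : w p < w j) (a1 : i ≠ -j) (a2 : p ≠ -i) (a3 : p ≠ -j) :
    ellB N w + 3 ≤ ellB N (w * trB i j) := by
  have hp : |p| ≤ N := by rw [abs_le] at *; omega
  have e : w * trB i j = w * trB i p * trB p j * trB i p := by
    rw [mul_assoc w, mul_assoc w]; congr 1
    have odd : ∀ x, trB i p (-x) = -trB i p x := (InB.trB hi hp).1
    have c1 : trB i p p = i := by rw [trB_apply]; split_ifs <;> omega
    have c2 : trB i p j = j := by rw [trB_apply]; split_ifs <;> omega
    rw [mul_trB odd, c1, c2, mul_assoc, trB_mul_self, mul_one]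
  have w1 := hw.mul (InB.trB hi hp)
  have w2 := w1.mul (InB.trB hp hj)
  have b1 := ellB_trB_gt hw hi0 hp0 hi hp hip h1
  have b2 := ellB_trB_gt w1 hp0 hj0 hp hj hpj (by
    have c1 : trB i p p = i := by rw [trB_apply]; split_ifs <;> omega
    have c2 : trB i p j = j := by rw [trB_apply]; split_ifs <;> omega
    simp only [Equiv.Perm.mul_apply, c1, c2]; omega)
  have b3 := ellB_trB_gt w2 hi0 hp0 hi hp hip (by
    have c1 : trB p j i = i := by rw [trB_apply]; split_ifs <;> omega
    have c2 : trB p j p = j := by rw [trB_apply]; split_ifs <;> omega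
    have c3 : trB i p i = p := by rw [trB_apply]; split_ifs <;> omega
    have c4 : trB i p j = j := by rw [trB_apply]; split_ifs <;> omega
    simp only [Equiv.Perm.mul_apply, c1, c2, c3, c4]; omega)
  rw [e]; omega

open Finset

open Classical in
/-- number of words of length `m` with product `w` -/
noncomputable def cntB (N : ℕ) : ℕ → Equiv.Perm ℤ → ℕ
  | 0, w => if w = 1 then 1 else 0
  | m + 1, w => ∑ k ∈ range N, cntB N m (sB k * w)

lemma cntB_succ (N m : ℕ) (w : Equiv.Perm ℤ) :
    cntB N (m + 1) w = ∑ k ∈ range N, cntB N m (sB k * w) := rfl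

lemma cntB_zero_of_lt {N : ℕ} : ∀ (m : ℕ) {w : Equiv.Perm ℤ}, InB N w → m < ellB N w →
    cntB N m w = 0 := by
  intro m
  induction m with
  | zero =>
    intro w hw h
    unfold cntB
    rw [if_neg]
    rintro rfl
    rw [ellB_one] at h; omega
  | succ m ih =>
    intro w hw h
    rw [cntB_succ]
    apply sum_eq_zero
    intro k hk
    rw [mem_range] at hk
    apply ih ((InB.sB hk).mul hw)
    rcases ellB_sB hw hk with ⟨_, h1⟩ | ⟨_, h1⟩ <;> omega

open Classical in
/-- the finite set of words of length `m` with product `w` -/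
noncomputable def wordsB (N : ℕ) : ℕ → Equiv.Perm ℤ → Finset (List ℕ)
  | 0, w => if w = 1 then {[]} else ∅
  | m + 1, w => (range N).biUnion fun k => (wordsB N m (sB k * w)).image (List.cons k)

lemma mem_wordsB {N : ℕ} : ∀ {m : ℕ} {w : Equiv.Perm ℤ} {l : List ℕ},
    l ∈ wordsB N m w ↔ (∀ i ∈ l, i < N) ∧ wordProd l = w ∧ l.length = m := by
  intro m
  induction m with
  | zero =>
    intro w l
    unfold wordsB
    split_ifs with h
    · subst h
      rw [mem_singleton]
      constructor
      · rintro rfl; simp [wordProd]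
      · rintro ⟨_, _, h⟩; exact List.length_eq_zero_iff.1 h
    · simp only [notMem_empty, false_iff]
      rintro ⟨_, h1, h2⟩
      rw [List.length_eq_zero_iff] at h2
      subst h2
      exact h (by rw [← h1]; rfl)
  | succ m ih =>
    intro w l
    unfold wordsB
    rw [mem_biUnion]
    constructor
    · rintro ⟨k, hk, h⟩
      rw [mem_image] at h
      obtain ⟨l', h', rfl⟩ := h
      rw [ih] at h'
      obtain ⟨h1, h2, h3⟩ := h'
      rw [mem_range] at hk
      refine ⟨?_, ?_, by simp [h3]⟩
      · intro i hi
        rcases List.mem_cons.1 hi with rfl | hi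
        · exact hk
        · exact h1 i hi
      · have : wordProd (k :: l') = sB k * wordProd l' := by simp [wordProd]
        rw [this, h2, sB_mul_cancel]
    · rintro ⟨h1, h2, h3⟩
      cases l with
      | nil => simp at h3
      | cons k l' =>
        have : wordProd (k :: l') = sB k * wordProd l' := by simp [wordProd]
        refine ⟨k, mem_range.2 (h1 k (by simp)), mem_image.2 ⟨l', ?_, rfl⟩⟩
        rw [ih]
        refine ⟨fun i hi => h1 i (by simp [hi]), ?_, by simpa using h3⟩
        rw [← h2, this, sB_mul_cancel]

lemma card_wordsB {N : ℕ} : ∀ (m : ℕ) (w : Equiv.Perm ℤ), (wordsB N m w).card = cntB N m w := by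
  intro m
  induction m with
  | zero => intro w; unfold wordsB cntB; split_ifs <;> simp
  | succ m ih =>
    intro w
    unfold wordsB
    rw [card_biUnion, cntB_succ]
    · apply sum_congr rfl
      intro k _
      rw [card_image_of_injective _ (List.cons_injective), ih]
    · intro a _ b _ hab
      rw [Function.onFun, disjoint_left]
      intro l h1 h2
      rw [mem_image] at h1 h2
      obtain ⟨x, _, rfl⟩ := h1
      obtain ⟨y, _, h⟩ := h2
      simp at h
      exact hab h.1.symm

lemma exists_word {N : ℕ} : ∀ (m : ℕ) {w : Equiv.Perm ℤ}, InB N w → ellB N w = m →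
    ∃ l : List ℕ, (∀ i ∈ l, i < N) ∧ wordProd l = w ∧ l.length = m := by
  intro m
  induction m with
  | zero =>
    intro w hw h
    exact ⟨[], by simp, by rw [eq_one_of_ellB hw h]; rfl, rfl⟩
  | succ m ih =>
    intro w hw h
    obtain ⟨k, hk, hd⟩ := exists_desc hw (by omega)
    have h1 := ellB_desc hw hk hd
    obtain ⟨l, h2, h3, h4⟩ := ih ((InB.sB hk).mul hw) (by omega)
    refine ⟨k :: l, ?_, ?_, by simp [h4]⟩
    · intro i hi
      rcases List.mem_cons.1 hi with rfl | hi
      · exact hk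
      · exact h2 i hi
    · have : wordProd (k :: l) = sB k * wordProd l := by simp [wordProd]
      rw [this, h3, sB_mul_cancel]

lemma ellB_le_word {N : ℕ} {w : Equiv.Perm ℤ} (hw : InB N w) {l : List ℕ}
    (h1 : ∀ i ∈ l, i < N) (h2 : wordProd l = w) : ellB N w ≤ l.length := by
  by_contra h
  push Not at h
  have h3 := cntB_zero_of_lt _ hw h
  rw [← card_wordsB, card_eq_zero] at h3
  have : l ∈ wordsB N l.length w := mem_wordsB.2 ⟨h1, h2, rfl⟩
  rw [h3] at this
  simp at this

lemma card_RSet {n : ℕ} {w : Equiv.Perm ℤ} (hw : InB n w) :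
    Nat.card ↥(RSet n w) = cntB n (ellB n w) w := by
  have : RSet n w = ↑(wordsB n (ellB n w) w) := by
    ext l
    rw [mem_coe, mem_wordsB]
    constructor
    · rintro ⟨h1, h2, h3⟩
      obtain ⟨l', a, b, c⟩ := exists_word _ hw rfl
      have := h3 l' a b
      have := ellB_le_word hw h1 h2
      exact ⟨h1, h2, by omega⟩
    · rintro ⟨h1, h2, h3⟩
      refine ⟨h1, h2, fun l' a b => ?_⟩
      rw [h3]; exact ellB_le_word hw a b
  rw [this, ← card_wordsB]
  simp

lemma ellB_mono {n N : ℕ} {w : Equiv.Perm ℤ} (hw : InB n w) (h : n ≤ N) :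
    ellB N w = ellB n w := by
  unfold ellB
  congr 1
  ext ⟨i, j⟩
  rw [mem_filter, mem_filter, mem_boxB, mem_boxB]
  simp only
  constructor
  · rintro ⟨h1, h2⟩
    refine ⟨⟨?_, h1.2⟩, h2⟩
    by_contra hc
    push Not at hc
    rw [hw.2 j hc] at h2
    by_cases hi : |i| ≤ n
    · have := hw.abs_le hi
      rw [abs_le] at this; omega
    · rw [hw.fix (by omega)] at h2; omega
  · rintro ⟨h1, h2⟩
    exact ⟨⟨by omega, h1.2⟩, h2⟩

lemma cntB_mono {n N : ℕ} (h : n ≤ N) : ∀ (m : ℕ) {w : Equiv.Perm ℤ}, InB n w → m ≤ ellB n w →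
    cntB N m w = cntB n m w := by
  intro m
  induction m with
  | zero => intro w hw h; rfl
  | succ m ih =>
    intro w hw hm
    rw [cntB_succ, cntB_succ]
    symm
    rw [← sum_subset (range_mono h)]
    · apply sum_congr rfl
      intro k hk
      rw [mem_range] at hk
      symm
      apply ih ((InB.sB hk).mul hw)
      rcases ellB_sB hw hk with ⟨_, h1⟩ | ⟨_, h1⟩ <;> omega
    · intro k hk hk'
      rw [mem_range] at hk hk'
      apply cntB_zero_of_lt _ ((InB.sB hk).mul (hw.mono h))
      have h0 := ellB_mono hw h
      have hlo := loB_cases k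
      rcases ellB_sB (hw.mono h) hk with ⟨h2, h1⟩ | ⟨_, h1⟩
      · exfalso
        rw [hw.inv.2 _ (by omega)] at h2
        by_cases hk2 : |loB k| ≤ n
        · have := hw.inv.abs_le hk2
          rw [abs_le] at this
          omega
        · rw [hw.inv.fix (by omega)] at h2
          omega
      · omega

/-- number of reduced words -/
noncomputable def aB (N : ℕ) (w : Equiv.Perm ℤ) : ℕ := cntB N (ellB N w) w

lemma card_RSet' {n N : ℕ} {w : Equiv.Perm ℤ} (hw : InB n w) (h : n ≤ N) :
    Nat.card ↥(RSet n w) = aB N w := by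
  rw [card_RSet hw, aB, ellB_mono hw h, cntB_mono h _ hw le_rfl]

open Finset

/-- summand in the signed cover sum; `u` decides comparabilities, `v` is the counted element -/
noncomputable def tB (N m : ℕ) (r : ℤ) (u v : Equiv.Perm ℤ) (q : ℤ) : ℤ :=
  if q ≠ 0 ∧ q < r ∧ u q < u r then (cntB N m (v * trB q r) : ℤ)
  else if q ≠ 0 ∧ r < q ∧ u r < u q then -(cntB N m (v * trB q r) : ℤ) else 0

noncomputable def eB (N m : ℕ) (r : ℤ) (w : Equiv.Perm ℤ) : ℤ :=
  ∑ q ∈ Icc (-(N : ℤ)) N, tB N m r w w q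

lemma sign_sum_aux (N : ℕ) (x : ℤ) (hx0 : x ≠ 0) (hx : |x| < N) :
    ∑ k ∈ range N, Int.sign (sB k x - x) = 0 := by
  have hx' := abs_lt.1 hx
  have key : ∀ k : ℕ, Int.sign (sB k x - x) =
      Int.sign x * ((if k = x.natAbs then 1 else 0) - (if k = x.natAbs - 1 then 1 else 0)) := by
    intro k
    have hlo := loB_cases k
    rcases lt_or_gt_of_ne hx0 with h | h
    · rw [Int.sign_eq_neg_one_of_neg h, sB_apply]
      split_ifs <;> first
        | omega
        | (rw [Int.sign_eq_one_of_pos (by omega)]; omega)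
        | (rw [Int.sign_eq_neg_one_of_neg (by omega)]; omega)
        | (rw [sub_self]; simp)
    · rw [Int.sign_eq_one_of_pos h, sB_apply]
      split_ifs <;> first
        | omega
        | (rw [Int.sign_eq_one_of_pos (by omega)]; omega)
        | (rw [Int.sign_eq_neg_one_of_neg (by omega)]; omega)
        | (rw [sub_self]; simp)
  rw [sum_congr rfl (fun k _ => key k), ← mul_sum, sum_sub_distrib, sum_ite_eq', sum_ite_eq',
    if_pos (mem_range.2 (by omega)), if_pos (mem_range.2 (by omega))]
  simp

lemma eB_step_aux {N m : ℕ} {w : Equiv.Perm ℤ} (hw : InB N w) {r : ℤ} (hr0 : r ≠ 0)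
    (hr : |r| ≤ N) {k : ℕ} (hk : k < N) :
    eB N m r (sB k * w) = (∑ q ∈ Icc (-(N : ℤ)) N, tB N m r w (sB k * w) q) +
      Int.sign (sB k (w r) - w r) * cntB N m w := by
  have hwr0 := hw.ne_zero hr0
  have gen : ∀ q, sB k (w q) ≠ w r → tB N m r (sB k * w) (sB k * w) q =
      tB N m r w (sB k * w) q := by
    intro q h
    by_cases hq0 : q = 0
    · subst hq0; simp [tB]
    have h1 := sB_mono k (hw.ne_zero hq0) hwr0 h
    have h2 := sB_mono k hwr0 (hw.ne_zero hq0) (fun h' => h (by rw [← h', sB_sB]))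
    unfold tB
    simp only [Equiv.Perm.mul_apply, h1, h2]
  unfold eB
  by_cases hx : sB k (w r) = w r
  · rw [hx, sub_self, Int.sign_zero, zero_mul, add_zero]
    apply sum_congr rfl
    intro q _
    by_cases hqr : q = r
    · subst hqr; simp [tB]
    apply gen
    intro h
    apply hqr
    rw [← hx] at h
    exact w.injective ((sB k).injective h)
  · obtain ⟨q0, hq0⟩ : ∃ q0, w q0 = sB k (w r) := ⟨w⁻¹ (sB k (w r)), by simp⟩
    have hqr : q0 ≠ r := by rintro rfl; exact hx hq0.symm
    have hs0 := (InB.sB hk).ne_zero hwr0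
    have hq00 : q0 ≠ 0 := by rintro rfl; rw [hw.zero] at hq0; exact hs0 hq0.symm
    have hqN : |q0| ≤ N := by
      have h1 := hw.inv.abs_le ((InB.sB hk).abs_le (hw.abs_le hr))
      rwa [← hq0, show w⁻¹ (w q0) = q0 from by rw [Equiv.Perm.inv_eq_iff_eq]] at h1
    have hmem : q0 ∈ Icc (-(N : ℤ)) N := by rw [mem_Icc]; exact abs_le.1 hqN
    rw [← add_sum_erase _ _ hmem, ← add_sum_erase _ (fun q => tB N m r w (sB k * w) q) hmem,
      sum_congr rfl (fun q hq => gen q (by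
        intro h
        rw [mem_erase] at hq
        apply hq.1
        apply w.injective
        rw [hq0, ← h, sB_sB]))]
    have hmul : (sB k * w) * trB q0 r = w := by
      have h1 : sB k (w q0) = w r := by rw [hq0, sB_sB]
      rw [mul_assoc, mul_trB_eq_sB_mul hw.1 h1 hqr, sB_mul_cancel]
    have e1 : (sB k * w) q0 = w r := by rw [Equiv.Perm.mul_apply, hq0, sB_sB]
    have e2 : (sB k * w) r = w q0 := by rw [Equiv.Perm.mul_apply, hq0]
    unfold tB
    rw [hmul, e1, e2, ← hq0]
    rw [← hq0] at hx
    rcases lt_or_gt_of_ne hx with h | h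
    · rw [Int.sign_eq_neg_one_of_neg (by omega)]
      split_ifs <;> omega
    · rw [Int.sign_eq_one_of_pos (by omega)]
      split_ifs <;> omega

lemma eB_step {N m : ℕ} {w : Equiv.Perm ℤ} (hw : InB N w) {r : ℤ} (hr0 : r ≠ 0)
    (hr : |r| ≤ N) (hwr : |w r| < N) :
    eB N (m + 1) r w = ∑ k ∈ range N, eB N m r (sB k * w) := by
  rw [sum_congr rfl (fun k hk => eB_step_aux hw hr0 hr (mem_range.1 hk)), sum_add_distrib,
    ← sum_mul, sign_sum_aux N _ (hw.ne_zero hr0) hwr, zero_mul, add_zero, sum_comm]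
  unfold eB
  apply sum_congr rfl
  intro q _
  unfold tB
  rw [cntB_succ]
  split_ifs
  · push_cast
    simp only [mul_assoc]
  · push_cast
    simp only [mul_assoc, sum_neg_distrib]
  · simp

lemma eB_zero_of_le {N m : ℕ} {w : Equiv.Perm ℤ} (hw : InB N w) {r : ℤ} (hr0 : r ≠ 0)
    (hr : |r| ≤ N) (hm : m ≤ ellB N w) : eB N m r w = 0 := by
  unfold eB
  apply sum_eq_zero
  intro q hq
  rw [mem_Icc, ← abs_le] at hq
  unfold tB
  split_ifs with h1 h2
  · have := ellB_trB_gt hw h1.1 hr0 hq hr h1.2.1 h1.2.2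
    rw [cntB_zero_of_lt _ (hw.mul (InB.trB hq hr)) (by omega)]; rfl
  · have := ellB_trB_gt hw hr0 h2.1 hr hq h2.2.1 h2.2.2
    rw [trB_comm] at this
    rw [cntB_zero_of_lt _ (hw.mul (InB.trB hq hr)) (by omega)]; rfl
  · rfl

lemma eB_zero {M : ℕ} {r : ℤ} (hr0 : r ≠ 0) (hr : |r| ≤ M) : ∀ (m : ℕ) {w : Equiv.Perm ℤ},
    InB M w → m ≤ ellB (M + 1) w + 1 → eB (M + 1) m r w = 0 := by
  intro m
  induction m with
  | zero =>
    intro w hw hm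
    exact eB_zero_of_le (hw.mono (by omega)) hr0 (by push_cast; omega) (by omega)
  | succ m ih =>
    intro w hw hm
    have hw' := hw.mono (show M ≤ M + 1 by omega)
    rcases Nat.lt_or_ge m (ellB (M + 1) w) with h | h
    · exact eB_zero_of_le hw' hr0 (by push_cast; omega) (by omega)
    have hwr := hw.abs_le hr
    rw [eB_step hw' hr0 (by push_cast; omega) (by push_cast; omega)]
    apply sum_eq_zero
    intro k hk
    rw [mem_range] at hk
    rcases ellB_sB hw' hk with ⟨h2, h1⟩ | ⟨_, h1⟩
    · have hkM : k < M := by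
        by_contra hc
        have hkM : k = M := by omega
        subst hkM
        have hlo := loB_cases k
        rw [hw.inv.2 _ (by omega)] at h2
        by_cases hk2 : |loB k| ≤ k
        · have := hw.inv.abs_le hk2
          rw [abs_le] at this
          omega
        · rw [hw.inv.fix (by omega)] at h2
          omega
      exact ih ((InB.sB hkM).mul hw) (by omega)
    · exact eB_zero_of_le ((InB.sB hk).mul hw') hr0 (by push_cast; omega) (by omega)

lemma ellB_cover {N : ℕ} : ∀ (d : ℕ) {w : Equiv.Perm ℤ} {i j : ℤ}, InB N w → i ≠ 0 → j ≠ 0 →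
    |i| ≤ N → |j| ≤ N → i < j → w i < w j → w j < 0 → w j - w i = d →
    (∀ p, i < p → p < j → ¬ (w i < w p ∧ w p < w j)) →
    ellB N (w * trB i j) = ellB N w + 1 := by
  intro d
  induction d with
  | zero => intro w i j _ _ _ _ _ _ _ _ _; omega
  | succ d ih =>
    intro w i j hw hi0 hj0 hi hj hij hlt hneg hd hbt
    have hA := hw.abs_le hi
    rw [abs_le] at hA
    obtain ⟨k, hk⟩ : ∃ k : ℕ, (k : ℤ) = - w i - 1 := ⟨(-w i - 1).toNat, by omega⟩
    have hkN : k < N := by omega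
    have hlo := loB_cases k
    have hgt := ellB_trB_gt hw hi0 hj0 hi hj hij hlt
    have hmi : w⁻¹ (k + 1) = -i := by
      rw [Equiv.Perm.inv_eq_iff_eq, hw.1]; omega
    by_cases hd0 : d = 0
    · have h1 : sB k (w i) = w j := by
        rw [sB_apply]; split_ifs <;> omega
      rw [mul_trB_eq_sB_mul hw.1 h1 (by omega)] at hgt ⊢
      rcases ellB_sB hw hkN with ⟨_, h⟩ | ⟨_, h⟩ <;> omega
    · obtain ⟨p, hp⟩ : ∃ p, w p = w i + 1 := ⟨w⁻¹ (w i + 1), by simp⟩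
      have hpi : p ≠ i := by rintro rfl; omega
      have hpj : p ≠ j := by rintro rfl; omega
      have hpi' : p ≠ -i := by rintro rfl; rw [hw.1] at hp; omega
      have hpj' : p ≠ -j := by rintro rfl; rw [hw.1] at hp; omega
      have hout : p < i ∨ j < p := by
        by_contra hc
        push Not at hc
        exact hbt p (by omega) (by omega) (by omega)
      have hml : w⁻¹ (loB k) = -p := by
        rw [Equiv.Perm.inv_eq_iff_eq, hw.1]; omega
      have hu := (InB.sB hkN).mul hw
      have ui : (sB k * w) i = w i + 1 := by
        rw [Equiv.Perm.mul_apply, sB_apply]; split_ifs <;> omega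
      have uj : (sB k * w) j = w j := by
        rw [Equiv.Perm.mul_apply, sB_apply]; split_ifs <;> omega
      have hI := ih hu hi0 hj0 hi hj hij (by omega) (by omega) (by omega) (by
        intro p' h1 h2 h3
        rw [ui, uj, Equiv.Perm.mul_apply] at h3
        have : sB k (w p') = w p' := by
          rw [sB_apply] at h3 ⊢
          split_ifs at * <;> omega
        rw [this] at h3
        exact hbt p' h1 h2 (by omega))
      have hv := hw.mul (InB.trB hi hj)
      have hmi2 : (w * trB i j)⁻¹ (k + 1) = -j := by
        rw [Equiv.Perm.inv_eq_iff_eq, hv.1, Equiv.Perm.mul_apply, trB_apply]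
        rw [if_neg (by omega), if_neg (by omega), if_pos rfl]; omega
      have hml2 : (w * trB i j)⁻¹ (loB k) = -p := by
        rw [Equiv.Perm.inv_eq_iff_eq, hv.1, Equiv.Perm.mul_apply, trB_apply]
        rw [if_neg (by omega), if_neg (by omega), if_neg (by omega), if_neg (by omega),
          if_neg (by omega)]; omega
      rw [mul_assoc] at hI
      have a1 := ellB_sB hw hkN
      have a2 := ellB_sB hv hkN
      rw [hmi, hml] at a1
      rw [hmi2, hml2] at a2
      omega

lemma transition {M : ℕ} {v : Equiv.Perm ℤ} (hv : InB M v) {r q1 q2 : ℤ} (hr0 : r ≠ 0)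
    (h10 : q1 ≠ 0) (h20 : q2 ≠ 0)
    (hr : |r| ≤ M) (h1 : |q1| ≤ M + 1) (h2 : |q2| ≤ M + 1) (hrq : r < q1) (hqr : q2 < r)
    (hv1 : v r < v q1) (hv2 : v q2 < v r)
    (c1 : ellB (M + 1) (v * trB q1 r) = ellB (M + 1) v + 1)
    (c2 : ellB (M + 1) (v * trB q2 r) = ellB (M + 1) v + 1)
    (hoth : ∀ q, q ≠ 0 → q ≠ q1 → q ≠ q2 → |q| ≤ M + 1 →
      ((q < r ∧ v q < v r) ∨ (r < q ∧ v r < v q)) →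
      ellB (M + 1) v + 2 ≤ ellB (M + 1) (v * trB q r)) :
    aB (M + 1) (v * trB q1 r) = aB (M + 1) (v * trB q2 r) := by
  have hE := eB_zero hr0 hr (ellB (M + 1) v + 1) hv le_rfl
  unfold eB at hE
  have hv' := hv.mono (show M ≤ M + 1 by omega)
  rw [← sum_subset (s₁ := {q1, q2})] at hE
  · rw [sum_pair (by omega)] at hE
    unfold tB at hE
    rw [if_neg (by omega), if_pos ⟨h10, hrq, hv1⟩, if_pos ⟨h20, hqr, hv2⟩] at hE
    unfold aB
    rw [c1, c2]
    omega
  · intro q hq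
    rw [mem_insert, mem_singleton] at hq
    rw [mem_Icc, ← abs_le]
    push_cast
    rcases hq with rfl | rfl <;> assumption
  · intro q hq hq'
    rw [mem_Icc, ← abs_le] at hq
    push_cast at hq
    rw [mem_insert, mem_singleton] at hq'
    push Not at hq'
    have hz : q ≠ 0 → ((q < r ∧ v q < v r) ∨ (r < q ∧ v r < v q)) →
        cntB (M + 1) (ellB (M + 1) v + 1) (v * trB q r) = 0 := by
      intro a b
      have := hoth q a hq'.1 hq'.2 hq b
      exact cntB_zero_of_lt _ (hv'.mul (InB.trB (by push_cast; omega) (by push_cast; omega)))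
        (by omega)
    unfold tB
    split_ifs with a b
    · rw [hz a.1 (Or.inl a.2)]; rfl
    · rw [hz b.1 (Or.inr b.2)]; rfl
    · rfl

open Finset

lemma index_step {M : ℕ} {w : Equiv.Perm ℤ} (hw : InB M w) {m r k P : ℤ} 
    (hneg : ∀ i, 1 ≤ i → i ≤ m → w i < 0) (hpos : ∀ i, m < i → 0 < w i)
    (hinc : ∀ i j, m < i → i < j → w i < w j)
    (hr1 : 1 ≤ r) (hrk : r < k) (hkm : k ≤ m) (hPm : m < P) (hPM : P ≤ M)
    (hzx : w k < w r)
    (h1 : ∀ i, r < i → i < k → w i < w k)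
    (h2 : ∀ i, k < i → i ≤ m → w r < w i)
    (h3 : ∀ i, 1 ≤ i → i < r → w k < w i)
    (hc : - w k < w P) (hP : ∀ i, m < i → -w k < w i → w P ≤ w i) :
    ∃ w' : Equiv.Perm ℤ, InB M w' ∧ w' r = - w P ∧ w' k = w r ∧ w' P = - w k ∧
      (∀ i, 1 ≤ i → i ≠ r → i ≠ k → i ≠ P → w' i = w i) ∧ aB (M + 1) w' = aB (M + 1) w := by
  have hrM : |r| ≤ M := by rw [abs_le]; omega
  have hkM : |k| ≤ M := by rw [abs_le]; omega
  have hPM' : |-P| ≤ M := by rw [abs_le]; omega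
  obtain ⟨v, hv⟩ : ∃ v, v = w * trB r k := ⟨_, rfl⟩
  have hvB : InB M v := by rw [hv]; exact hw.mul (InB.trB hrM hkM)
  have vr : v r = w k := by
    rw [hv, Equiv.Perm.mul_apply, trB_apply]
    congr 1; split_ifs <;> omega
  have vk : v k = w r := by
    rw [hv, Equiv.Perm.mul_apply, trB_apply]
    congr 1; split_ifs <;> omega
  have vo : ∀ i, 1 ≤ i → i ≠ r → i ≠ k → v i = w i := by
    intro i a b c
    rw [hv, Equiv.Perm.mul_apply, trB_apply]
    congr 1; split_ifs <;> omega
  have vback : v * trB k r = w := by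
    rw [hv, trB_comm k r, mul_assoc, trB_mul_self, mul_one]
  have hr0 := hneg r (by omega) (by omega)
  have hk0 := hneg k (by omega) (by omega)
  have vneg : ∀ i, 1 ≤ i → i ≤ m → v i < 0 := by
    intro i a b
    by_cases e1 : i = r
    · subst e1; omega
    by_cases e2 : i = k
    · subst e2; omega
    rw [vo i a e1 e2]; exact hneg i a b
  have vnP : v (-P) = - w P := by rw [hvB.1, vo P (by omega) (by omega) (by omega)]
  have hvN := hvB.mono (show M ≤ M + 1 by omega)
  have hT := transition (v := v) hvB (r := r) (q1 := k) (q2 := -P) (by omega) (by omega) (by omega)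
    hrM (by omega) (by omega) hrk (by omega) (by omega) (by omega)
    (by
      rw [trB_comm]
      refine ellB_cover (v k - v r).toNat hvN (by omega) (by omega) (by push_cast; omega)
        (by push_cast; omega) hrk (by omega) (by omega) (by omega) ?_
      rintro p a b ⟨c, d⟩
      rw [vo p (by omega) (by omega) (by omega)] at c d
      have := h1 p a b
      omega)
    (by
      refine ellB_cover (v r - v (-P)).toNat hvN (by omega) (by omega) (by push_cast; omega)
        (by push_cast; omega) (by omega) (by omega) (by omega) (by omega) ?_
      rintro p a b ⟨c, d⟩
      rcases lt_trichotomy p 0 with h | h | h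
      · have e := hvB.1 (-p)
        rw [neg_neg] at e
        by_cases hpm : -p ≤ m
        · have := vneg (-p) (by omega) hpm
          omega
        · rw [vo (-p) (by omega) (by omega) (by omega)] at e
          have := hP (-p) (by omega) (by omega)
          have := hinc (-p) P (by omega) (by omega)
          omega
      · subst h; rw [hvB.zero] at d; omega
      · rw [vo p (by omega) (by omega) (by omega)] at d
        have := h3 p (by omega) b
        omega)
    (by
      intro q hq0 hqk hqP hqM hq
      rcases hq with ⟨a, b⟩ | ⟨a, b⟩
      · rcases lt_or_gt_of_ne hq0 with h | h
        · have e := hvB.1 (-q)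
          rw [neg_neg] at e
          by_cases hpm : -q ≤ m
          · have := vneg (-q) (by omega) hpm
            omega
          · rw [vo (-q) (by omega) (by omega) (by omega)] at e
            have h5 := hP (-q) (by omega) (by omega)
            have h6 : P < -q := by
              by_contra hcon
              have := hinc (-q) P (by omega) (by omega)
              omega
            have h7 := hinc P (-q) (by omega) h6
            have := ellB_between hvN (i := q) (j := r) (p := -P) hq0 (by omega) (by omega)
              (by push_cast; omega) (by push_cast; omega) (by omega) (by omega)
              (by omega) (by omega) (by omega) (by omega) (by omega)
            omega
        · rw [vo q (by omega) (by omega) (by omega)] at b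
          have := h3 q (by omega) a
          omega
      · have hkq : k < q := by
          by_contra hcon
          rw [vo q (by omega) (by omega) (by omega)] at b
          have := h1 q a (by omega)
          omega
        have h4 : v k < v q := by
          rw [vo q (by omega) (by omega) (by omega), vk]
          by_cases hqm : q ≤ m
          · exact h2 q hkq hqm
          · have := hpos q (by omega)
            omega
        have := ellB_between hvN (i := r) (j := q) (p := k) (by omega) (by omega) (by omega)
              (by push_cast; omega) (by push_cast; omega) (by omega) (by omega)
              (by omega) (by omega) (by omega) (by omega) (by omega)
        rw [trB_comm] at this
        omega)
  rw [vback] at hT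
  refine ⟨v * trB (-P) r, hvB.mul (InB.trB hPM' hrM), ?_, ?_, ?_, ?_, hT.symm⟩
  · rw [Equiv.Perm.mul_apply, trB_apply, ← vnP]
    congr 1; split_ifs <;> omega
  · rw [Equiv.Perm.mul_apply, trB_apply, ← vk]
    congr 1; split_ifs <;> omega
  · rw [Equiv.Perm.mul_apply, trB_apply, ← vr, ← hvB.1]
    congr 1; split_ifs <;> omega
  · intro i a b c d
    rw [Equiv.Perm.mul_apply, trB_apply, ← vo i a b c]
    congr 1; split_ifs <;> omega

/-- the values of `w` at `s, s+1, …` are the negatives of the list entries -/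
def SegB (w : Equiv.Perm ℤ) : ℤ → List ℕ → Prop
  | _, [] => True
  | s, a :: b => w s = -(a : ℤ) ∧ SegB w (s + 1) b

lemma SegB_append {w : Equiv.Perm ℤ} : ∀ {a b : List ℕ} {s : ℤ},
    SegB w s (a ++ b) ↔ SegB w s a ∧ SegB w (s + a.length) b := by
  intro a
  induction a with
  | nil => intro b s; simp [SegB]
  | cons x a ih =>
    intro b s
    simp only [List.cons_append, SegB, ih, List.length_cons, and_assoc]
    push_cast
    rw [show s + 1 + (a.length : ℤ) = s + (a.length + 1) by ring]

lemma SegB_congr {w w' : Equiv.Perm ℤ} : ∀ {a : List ℕ} {s : ℤ},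
    (∀ i, s ≤ i → i < s + a.length → w' i = w i) → SegB w s a → SegB w' s a := by
  intro a
  induction a with
  | nil => intros; trivial
  | cons x a ih =>
    intro s h hs
    simp only [List.length_cons] at h
    push_cast at h
    refine ⟨by rw [h s (by omega) (by omega)]; exact hs.1, ih (fun i h1 h2 => h i (by omega) (by omega)) hs.2⟩

lemma SegB_mem {w : Equiv.Perm ℤ} : ∀ {a : List ℕ} {s : ℤ}, SegB w s a →
    ∀ x ∈ a, ∃ i, s ≤ i ∧ i < s + a.length ∧ w i = -(x : ℤ) := by
  intro a
  induction a with
  | nil => intro s _ x hx; simp at hx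
  | cons y a ih =>
    intro s hs x hx
    rcases List.mem_cons.1 hx with rfl | hx
    · exact ⟨s, le_rfl, by simp, hs.1⟩
    · obtain ⟨i, a1, a2, a3⟩ := ih hs.2 x hx
      exact ⟨i, by omega, by simp; omega, a3⟩

lemma SegB_get {w : Equiv.Perm ℤ} : ∀ {a : List ℕ} {s : ℤ}, SegB w s a →
    ∀ i, s ≤ i → i < s + a.length → ∃ x ∈ a, w i = -(x : ℤ) := by
  intro a
  induction a with
  | nil => intro s _ i h1 h2; simp at h2; omega
  | cons y a ih =>
    intro s hs i h1 h2
    simp only [List.length_cons] at h2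
    push_cast at h2
    by_cases h : i = s
    · subst h; exact ⟨y, by simp, hs.1⟩
    · obtain ⟨x, b1, b2⟩ := ih hs.2 i (by omega) (by omega)
      exact ⟨x, by simp [b1], b2⟩

/-- `w` starts with the negatives of `b`, followed by increasing positive values -/
structure RepB (M : ℕ) (w : Equiv.Perm ℤ) (b : List ℕ) : Prop where
  inB : InB M w
  bpos : ∀ a ∈ b, 0 < a
  seg : SegB w 1 b
  pos : ∀ i : ℤ, (b.length : ℤ) < i → 0 < w i
  inc : ∀ i j : ℤ, (b.length : ℤ) < i → i < j → w i < w j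

/-- transfer relation -/
def EqvB (M : ℕ) (b b' : List ℕ) : Prop :=
  ∀ w, RepB M w b → ∃ w', RepB M w' b' ∧ aB (M + 1) w' = aB (M + 1) w

lemma EqvB.refl (M : ℕ) (b : List ℕ) : EqvB M b b := fun w h => ⟨w, h, rfl⟩

lemma EqvB.trans {M : ℕ} {a b c : List ℕ} (h1 : EqvB M a b) (h2 : EqvB M b c) : EqvB M a c := by
  intro w hw
  obtain ⟨w1, h3, h4⟩ := h1 w hw
  obtain ⟨w2, h5, h6⟩ := h2 w1 h3
  exact ⟨w2, h5, h6.trans h4⟩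

lemma list_step {M : ℕ} {p e f : List ℕ} {x z c : ℕ}
    (he : ∀ a ∈ e, z < a) (hxz : x < z) (hf : ∀ a ∈ f, a < x) (hp : ∀ a ∈ p, a < z)
    (hcb : c ∉ p ++ x :: (e ++ z :: f)) (hcM : c ≤ M) (hzc : z < c)
    (hbt : ∀ y, z < y → y < c → y ∈ p ++ x :: (e ++ z :: f)) :
    EqvB M (p ++ x :: (e ++ z :: f)) (p ++ c :: (e ++ x :: f)) := by
  intro w hR
  obtain ⟨hw, hbpos, hseg, hpos, hinc⟩ := hR
  have hseg0 := hseg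
  obtain ⟨m, hm⟩ : ∃ m : ℤ, m = ((p ++ x :: (e ++ z :: f)).length : ℤ) := ⟨_, rfl⟩
  rw [← hm] at hpos hinc
  have hlen : m = p.length + e.length + f.length + 2 := by
    rw [hm]; simp only [List.length_append, List.length_cons]; push_cast; ring
  rw [SegB_append] at hseg
  obtain ⟨sp, sx, hseg⟩ := hseg
  rw [SegB_append] at hseg
  obtain ⟨se, sz, sf⟩ := hseg
  obtain ⟨r, hr⟩ : ∃ r : ℤ, r = 1 + p.length := ⟨_, rfl⟩
  obtain ⟨k, hk⟩ : ∃ k : ℤ, k = r + 1 + e.length := ⟨_, rfl⟩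
  rw [← hr] at sx se sz sf
  rw [← hk] at sz sf
  have hneg : ∀ i, 1 ≤ i → i ≤ m → w i < 0 := by
    intro i h1 h2
    obtain ⟨y, hy, h⟩ := SegB_get hseg0 i h1 (by omega)
    have := hbpos y hy
    omega
  obtain ⟨P, hP⟩ : ∃ P, w P = c := ⟨w⁻¹ c, by simp⟩
  have hPM : |P| ≤ M := by
    have : |w⁻¹ (c : ℤ)| ≤ M := hw.inv.abs_le (by rw [abs_le]; omega)
    rwa [← hP, show w⁻¹ (w P) = P from by rw [Equiv.Perm.inv_eq_iff_eq]] at this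
  rw [abs_le] at hPM
  have hPm : m < P := by
    by_contra hcon
    rcases lt_trichotomy P 0 with h | h | h
    · have e1 := hw.1 P
      have h2 : -P ≤ m := by
        by_contra h3
        have := hpos (-P) (by omega)
        omega
      obtain ⟨y, hy, h⟩ := SegB_get hseg0 (-P) (by omega) (by omega)
      have : y = c := by omega
      subst this
      exact hcb hy
    · subst h; rw [hw.zero] at hP; omega
    · have := hneg P (by omega) (by omega)
      omega
  have hPmin : ∀ i, m < i → -w k < w i → w P ≤ w i := by
    intro i h1 h2
    by_contra h3
    have hi := hpos i h1
    obtain ⟨j, b1, b2, b3⟩ := SegB_mem hseg0 (w i).toNat (hbt _ (by omega) (by omega))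
    have e1 := hw.1 j
    have : -j = i := w.injective (by omega)
    omega
  obtain ⟨w', i1, i2, i3, i4, i5, i6⟩ := index_step hw (m := m) (r := r) (k := k) (P := P) hneg hpos hinc
    (by omega) (by omega) (by omega) hPm (by omega) (by omega)
    (by
      intro i h1 h2
      obtain ⟨y, hy, h⟩ := SegB_get se i (by omega) (by omega)
      have := he y hy
      omega)
    (by
      intro i h1 h2
      obtain ⟨y, hy, h⟩ := SegB_get sf i (by omega) (by omega)
      have := hf y hy
      omega)
    (by
      intro i h1 h2
      obtain ⟨y, hy, h⟩ := SegB_get sp i (by omega) (by omega)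
      have := hp y hy
      omega)
    (by omega) hPmin
  refine ⟨w', ⟨i1, ?_, ?_, ?_, ?_⟩, i6⟩
  · intro a ha
    simp only [List.mem_append, List.mem_cons] at ha hbpos
    rcases ha with h | h | h | h | h
    · exact hbpos a (by simp [h])
    · omega
    · exact hbpos a (by simp [h])
    · subst h; exact hbpos _ (by simp)
    · exact hbpos a (by simp [h])
  · rw [SegB_append, ← hr]
    refine ⟨SegB_congr (fun i h1 h2 => i5 i (by omega) (by omega) (by omega) (by omega)) sp, ?_, ?_⟩
    · omega
    rw [SegB_append, ← hk]
    refine ⟨SegB_congr (fun i h1 h2 => i5 i (by omega) (by omega) (by omega) (by omega)) se, ?_, ?_⟩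
    · omega
    · exact SegB_congr (fun i h1 h2 => i5 i (by omega) (by omega) (by omega) (by omega)) sf
  · have hl : ((p ++ c :: (e ++ x :: f)).length : ℤ) = m := by
      rw [hm]; simp
    rw [hl]
    intro i hi
    by_cases h : i = P
    · subst h; omega
    · rw [i5 i (by omega) (by omega) (by omega) h]; exact hpos i hi
  · have hl : ((p ++ c :: (e ++ x :: f)).length : ℤ) = m := by
      rw [hm]; simp
    rw [hl]
    intro i j hi hij
    have hij' := hinc i j hi hij
    by_cases h : i = P
    · subst h
      rw [i4, i5 j (by omega) (by omega) (by omega) (by omega)]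
      omega
    · rw [i5 i (by omega) (by omega) (by omega) h]
      by_cases h' : j = P
      · subst h'
        rw [i4]
        by_contra hcon
        have hne : w i ≠ -w k := by
          intro hh
          rw [← hw.1] at hh
          have := w.injective hh
          omega
        have := hPmin i hi (by omega)
        omega
      · rw [i5 j (by omega) (by omega) (by omega) h']; exact hij'

lemma run_decomp : ∀ (e : List ℕ), e ≠ [] → e.Pairwise (· > ·) →
    ∃ (e' g : List ℕ) (z c : ℕ), e = e' ++ (g ++ [z]) ∧ (g ++ [z]).map (· + 1) = c :: g ∧
      (∀ a ∈ e', c < a) ∧ (∀ a ∈ g, a < c) ∧ (∀ y, z < y → y < c → y ∈ g) ∧ z < c := by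
  intro e
  induction e with
  | nil => intro h; exact absurd rfl h
  | cons a e1 ih =>
    intro _ hp
    rw [List.pairwise_cons] at hp
    by_cases h1 : e1 = []
    · subst h1
      exact ⟨[], [], a, a + 1, by simp, by simp, by simp, by simp, by intros; omega, by omega⟩
    obtain ⟨e', g, z, c, rfl, hmap, he', hg, hbt, hzc⟩ := ih h1 hp.2
    by_cases h2 : e' = []
    · subst h2
      have hc : c ∈ (g ++ [z]).map (· + 1) := by rw [hmap]; simp
      rw [List.mem_map] at hc
      obtain ⟨d, hd, hdc⟩ := hc
      have hda := hp.1 d (by simpa using hd)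
      by_cases h3 : a = c
      · subst h3
        refine ⟨[], a :: g, z, a + 1, by simp, ?_, by simp, ?_, ?_, by omega⟩
        · rw [List.cons_append, List.map_cons, hmap]
        · intro y hy
          rcases List.mem_cons.1 hy with rfl | hy
          · omega
          · have := hg y hy; omega
        · intro y h4 h5
          by_cases h6 : y = a
          · simp [h6]
          · exact List.mem_cons_of_mem _ (hbt y h4 (by omega))
      · exact ⟨[a], g, z, c, by simp, hmap, by simp; omega, hg, hbt, hzc⟩
    · refine ⟨a :: e', g, z, c, by simp, hmap, ?_, hg, hbt, hzc⟩
      obtain ⟨y, hy⟩ := List.exists_mem_of_ne_nil _ h2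
      intro b hb
      rcases List.mem_cons.1 hb with rfl | hb
      · have := hp.1 y (by simp [hy])
        have := he' y hy
        omega
      · exact he' b hb

lemma insert_lemma {M : ℕ} : ∀ (L : ℕ) (p e f : List ℕ) (x : ℕ), e.length = L →
    e.Pairwise (· > ·) → (∀ a ∈ p, ∀ b ∈ e, a < b) → (∀ b ∈ e, x < b) → (∀ a ∈ f, a < x) →
    (∀ b ∈ e, b + 1 ≤ M) →
    EqvB M (p ++ x :: (e ++ f)) (p ++ (e.map (· + 1) ++ x :: f)) := by
  intro L
  induction L using Nat.strong_induction_on with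
  | _ L ih =>
  intro p e f x hL hpw hp hx hf hM
  by_cases he : e = []
  · subst he; exact EqvB.refl _ _
  obtain ⟨e', g, z, c, rfl, hmap, he', hg, hbt, hzc⟩ := run_decomp e he hpw
  have hcM : c ≤ M := by
    have hc : c ∈ (g ++ [z]).map (· + 1) := by rw [hmap]; simp
    rw [List.mem_map] at hc
    obtain ⟨d, hd, hdc⟩ := hc
    have := hM d (List.mem_append_right _ hd)
    omega
  have hzm : z ∈ e' ++ (g ++ [z]) := by simp
  have hxz := hx z hzm
  have hgz : ∀ a ∈ e' ++ g, z < a := by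
    intro a ha
    rw [← List.append_assoc, List.pairwise_append] at hpw
    exact hpw.2.2 a ha z (by simp)
  have s1 := list_step (M := M) (p := p) (e := e' ++ g) (f := f) (x := x) (z := z) (c := c)
    hgz hxz hf (fun a ha => hp a ha z hzm)
    (by
      intro hc
      simp only [List.mem_append, List.mem_cons] at hc
      rcases hc with h | h | (h | h) | h | h
      · have := hp c h z hzm; omega
      · omega
      · have := he' c h; omega
      · have := hg c h; omega
      · omega
      · have := hf c h; omega)
    hcM hzc
    (by
      intro y h1 h2
      have := hbt y h1 h2
      simp [this])
  have s2 := ih e'.length (by rw [← hL]; simp) p e' (g ++ x :: f) c rfl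
    (List.pairwise_append.1 hpw).1 (fun a ha b hb => hp a ha b (by simp [hb])) he'
    (by
      intro a ha
      simp only [List.mem_append, List.mem_cons] at ha
      rcases ha with h | h | h
      · exact hg a h
      · omega
      · have := hf a h; omega)
    (fun b hb => hM b (by simp [hb]))
  rw [List.map_append, hmap]
  simp only [List.append_assoc, List.cons_append, List.nil_append] at s1 s2 ⊢
  exact s1.trans s2

/-- `[j+1, …, j+q]` -/
def upB (j : ℕ) : ℕ → List ℕ
  | 0 => []
  | q + 1 => upB j q ++ [j + q + 1]

/-- `[2q-1, …, 3, 1]` -/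
def odB : ℕ → List ℕ
  | 0 => []
  | q + 1 => (2 * q + 1) :: odB q

lemma mem_upB {j : ℕ} : ∀ {q a : ℕ}, a ∈ upB j q ↔ j < a ∧ a ≤ j + q := by
  intro q
  induction q with
  | zero => intro a; simp [upB]
  | succ q ih => intro a; simp [upB, ih]; omega

lemma mem_odB : ∀ {q a : ℕ}, a ∈ odB q ↔ ∃ i < q, a = 2 * i + 1 := by
  intro q
  induction q with
  | zero => intro a; simp [odB]
  | succ q ih =>
    intro a
    simp only [odB, List.mem_cons, ih]
    constructor
    · rintro (h | ⟨i, h1, h2⟩)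
      · exact ⟨q, by omega, h⟩
      · exact ⟨i, by omega, h2⟩
    · rintro ⟨i, h1, h2⟩
      by_cases h : i = q
      · subst h; exact Or.inl h2
      · exact Or.inr ⟨i, by omega, h2⟩

lemma odB_pw : ∀ q, (odB q).Pairwise (· > ·) := by
  intro q
  induction q with
  | zero => simp [odB]
  | succ q ih =>
    simp only [odB, List.pairwise_cons]
    refine ⟨fun a ha => ?_, ih⟩
    rw [mem_odB] at ha
    obtain ⟨i, h1, h2⟩ := ha
    omega

lemma map_pw {e : List ℕ} (h : e.Pairwise (· > ·)) (q : ℕ) :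
    (e.map (· + q)).Pairwise (· > ·) := by
  rw [List.pairwise_map]
  exact h.imp (fun h => by omega)

lemma run_lemma {M : ℕ} (p : List ℕ) (j : ℕ) (hp : ∀ a ∈ p, a ≤ j) : ∀ (q : ℕ) (e : List ℕ),
    e.Pairwise (· > ·) → (∀ b ∈ e, j + q < b) → (∀ b ∈ e, b + q ≤ M) → j + 2 * q ≤ M →
    EqvB M (p ++ (upB j q ++ e)) (p ++ (e.map (· + q) ++ (odB q).map (· + j))) := by
  intro q
  induction q with
  | zero =>
    intro e _ _ _ _
    simp only [upB, odB, List.map_nil, List.append_nil, List.nil_append, add_zero, List.map_id']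
    exact EqvB.refl _ _
  | succ q ih =>
    intro e hpw he hM hj
    have s1 := insert_lemma (M := M) e.length (p ++ upB j q) e [] (j + q + 1) rfl hpw
      (by
        intro a ha b hb
        have := he b hb
        rcases List.mem_append.1 ha with h | h
        · have := hp a h; omega
        · rw [mem_upB] at h; omega)
      (fun b hb => by have := he b hb; omega) (by simp)
      (fun b hb => by have := hM b hb; omega)
    have s2 := ih (e.map (· + 1) ++ [j + q + 1])
      (by
        rw [List.pairwise_append]
        refine ⟨map_pw hpw 1, by simp, ?_⟩
        intro a ha b hb
        rw [List.mem_map] at ha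
        obtain ⟨d, hd, rfl⟩ := ha
        have := he d hd
        simp at hb
        omega)
      (by
        intro b hb
        simp only [List.mem_append, List.mem_map, List.mem_singleton] at hb
        rcases hb with ⟨d, hd, rfl⟩ | rfl
        · have := he d hd; omega
        · omega)
      (by
        intro b hb
        simp only [List.mem_append, List.mem_map, List.mem_singleton] at hb
        rcases hb with ⟨d, hd, rfl⟩ | rfl
        · have := hM d hd; omega
        · omega)
      (by omega)
    have e1 : (e.map (· + 1)).map (· + q) = e.map (· + (q + 1)) := by
      rw [List.map_map]; apply List.map_congr_left; intro a _; simp; omega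
    have e2 : j + q + 1 + q = 2 * q + 1 + j := by omega
    simp only [upB, odB, List.append_assoc, List.cons_append, List.nil_append, List.append_nil,
      List.map_append, List.map_cons, List.map_nil, e1, e2] at s1 s2 ⊢
    exact s1.trans s2

open Finset

lemma len_upB (j q : ℕ) : (upB j q).length = q := by
  induction q with
  | zero => rfl
  | succ q ih => simp [upB, ih]

lemma SegB_upB {w : Equiv.Perm ℤ} (j : ℕ) : ∀ q : ℕ,
    (∀ i : ℕ, j < i → i ≤ j + q → w i = -(i : ℤ)) → SegB w (j + 1) (upB j q) := by
  intro q
  induction q with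
  | zero => intro _; trivial
  | succ q ih =>
    intro h
    simp only [upB, SegB_append]
    refine ⟨ih (fun i h1 h2 => h i h1 (by omega)), ?_, trivial⟩
    rw [len_upB]
    have := h (j + q + 1) (by omega) (by omega)
    push_cast at this ⊢
    rw [show (j : ℤ) + 1 + q = j + q + 1 by ring]
    exact this

lemma InB_w0B (n : ℕ) : InB n (w0B n) := by
  have h : ∀ x, w0B n x = w0BFun n x := fun x => rfl
  refine ⟨fun x => ?_, fun x hx => ?_⟩
  · simp only [h, w0BFun]; split_ifs <;> omega
  · simp only [h, w0BFun]; split_ifs <;> omega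

lemma RepB_w0B {n M : ℕ} (hn : n ≤ M) : RepB M (w0B n) (upB 0 n) := by
  have h : ∀ x, w0B n x = w0BFun n x := fun x => rfl
  refine ⟨(InB_w0B n).mono hn, ?_, ?_, ?_, ?_⟩
  · intro a ha; rw [mem_upB] at ha; omega
  · have := SegB_upB (w := w0B n) 0 n (by
      intro i h1 h2
      rw [h, w0BFun]; split_ifs <;> omega)
    simpa using this
  · intro i hi
    rw [len_upB] at hi
    rw [h, w0BFun]; split_ifs <;> omega
  · intro i j hi hij
    rw [len_upB] at hi
    simp only [h, w0BFun]; split_ifs <;> omega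

lemma InB_wk {n k : ℕ} {w : Equiv.Perm ℤ} (hk1 : 1 ≤ k) (hk : k + 2 ≤ n)
    (h : ∀ i : ℤ, w i = wkFun n k i) : InB n w := by
  refine ⟨fun x => ?_, fun x hx => ?_⟩
  · simp only [h, wkFun]; split_ifs <;> omega
  · simp only [h, wkFun]; split_ifs <;> omega

lemma RepB_wk {i t M : ℕ} {w : Equiv.Perm ℤ} (hM : i + 3 + t ≤ M)
    (h : ∀ x : ℤ, w x = wkFun (i + 3 + t) (i + 1) x) :
    RepB M w (upB 0 i ++ ([i + 3, i + 2, i + 1] ++ upB (i + 3) t)) := by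
  refine ⟨(InB_wk (by omega) (by omega) h).mono hM, ?_, ?_, ?_, ?_⟩
  · intro a ha
    simp only [List.mem_append, mem_upB, List.mem_cons, List.not_mem_nil, or_false] at ha
    omega
  · rw [SegB_append, SegB_append]
    refine ⟨?_, ⟨?_, ?_, ?_, trivial⟩, ?_⟩
    · have := SegB_upB (w := w) 0 i (by
        intro x h1 h2
        rw [h, wkFun]; push_cast; split_ifs <;> omega)
      simpa using this
    · rw [h, wkFun, len_upB]; push_cast; split_ifs <;> omega
    · rw [h, wkFun, len_upB]; push_cast; split_ifs <;> omega
    · rw [h, wkFun, len_upB]; push_cast; split_ifs <;> omega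
    · have := SegB_upB (w := w) (i + 3) t (by
        intro x h1 h2
        rw [h, wkFun]; push_cast; split_ifs <;> omega)
      rw [len_upB]
      convert this using 1
      simp; ring
  · intro x hx
    simp only [List.length_append, len_upB, List.length_cons, List.length_nil] at hx
    push_cast at hx
    rw [h, wkFun]; push_cast; split_ifs <;> omega
  · intro x y hx hxy
    simp only [List.length_append, len_upB, List.length_cons, List.length_nil] at hx
    push_cast at hx
    simp only [h, wkFun]; push_cast; split_ifs <;> omega

lemma eqv_w0 {n M : ℕ} (hM : 2 * n ≤ M) : EqvB M (upB 0 n) (odB n) := by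
  have := run_lemma (M := M) [] 0 (by simp) n [] (by simp) (by simp) (by simp) (by omega)
  simpa using this

lemma eqv_wk {i t M : ℕ} (hM : 4 * (i + t) + 20 ≤ M) :
    EqvB M (upB 0 i ++ ([i + 3, i + 2, i + 1] ++ upB (i + 3) t))
      ((odB t).map (· + (2 * i + 6)) ++ ([2 * i + 3, 2 * i + 2, 2 * i + 1] ++ odB i)) := by
  have hd : ∀ s, ∀ b ∈ (odB t).map (· + s), s < b ∧ b < s + 2 * t := by
    intro s b hb
    rw [List.mem_map] at hb
    obtain ⟨a, ha, rfl⟩ := hb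
    rw [mem_odB] at ha
    obtain ⟨u, h1, rfl⟩ := ha
    omega
  have hmm : ∀ s u, ((odB t).map (· + s)).map (· + u) = (odB t).map (· + (s + u)) := by
    intro s u
    rw [List.map_map]; apply List.map_congr_left; intro a _; simp; omega
  have s1 := run_lemma (M := M) (upB 0 i ++ [i + 3, i + 2, i + 1]) (i + 3)
    (by
      intro a ha
      simp only [List.mem_append, mem_upB, List.mem_cons, List.not_mem_nil, or_false] at ha
      omega) t [] (by simp) (by simp) (by simp) (by omega)
  have s2 := insert_lemma (M := M) _ (upB 0 i ++ [i + 3, i + 2]) ((odB t).map (· + (i + 3))) []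
    (i + 1) rfl (map_pw (odB_pw t) _)
    (by
      intro a ha b hb
      have := hd _ b hb
      simp only [List.mem_append, mem_upB, List.mem_cons, List.not_mem_nil, or_false] at ha
      omega) (by intro b hb; have := hd _ b hb; omega) (by simp)
      (by intro b hb; have := hd _ b hb; omega)
  have s3 := insert_lemma (M := M) _ (upB 0 i ++ [i + 3]) ((odB t).map (· + (i + 4))) [i + 1]
    (i + 2) rfl (map_pw (odB_pw t) _)
    (by
      intro a ha b hb
      have := hd _ b hb
      simp only [List.mem_append, mem_upB, List.mem_cons, List.not_mem_nil, or_false] at ha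
      omega) (by intro b hb; have := hd _ b hb; omega) (by simp)
      (by intro b hb; have := hd _ b hb; omega)
  have s4 := insert_lemma (M := M) _ (upB 0 i) ((odB t).map (· + (i + 5))) [i + 2, i + 1]
    (i + 3) rfl (map_pw (odB_pw t) _)
    (by
      intro a ha b hb
      have := hd _ b hb
      simp only [mem_upB] at ha
      omega) (by intro b hb; have := hd _ b hb; omega) (by simp)
      (by intro b hb; have := hd _ b hb; omega)
  have s5 := run_lemma (M := M) [] 0 (by simp) i ((odB t).map (· + (i + 6)) ++ [i + 3, i + 2, i + 1])
    (by
      rw [List.pairwise_append]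
      refine ⟨map_pw (odB_pw t) _, by simp, ?_⟩
      intro a ha b hb
      have := hd _ a ha
      simp only [List.mem_cons, List.not_mem_nil, or_false] at hb
      omega)
    (by
      intro b hb
      rcases List.mem_append.1 hb with h | h
      · have := hd _ b h; omega
      · simp only [List.mem_cons, List.not_mem_nil, or_false] at h; omega)
    (by
      intro b hb
      rcases List.mem_append.1 hb with h | h
      · have := hd _ b h; omega
      · simp only [List.mem_cons, List.not_mem_nil, or_false] at h; omega)
    (by omega)
  have a1 : i + 6 + i = 2 * i + 6 := by omega
  have a2 : i + 3 + i = 2 * i + 3 := by omega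
  have a3 : i + 2 + i = 2 * i + 2 := by omega
  have a4 : i + 1 + i = 2 * i + 1 := by omega
  simp only [List.append_assoc, List.cons_append, List.nil_append, List.append_nil,
    List.map_append, List.map_cons, List.map_nil, hmm, a1, a2, a3, a4, add_zero, List.map_id']
    at s1 s2 s3 s4 s5 ⊢
  exact (((s1.trans s2).trans s3).trans s4).trans s5

/-- Grassmannian elements -/
structure GrB (M : ℕ) (w : Equiv.Perm ℤ) (S : Finset ℕ) : Prop where
  inB : InB M w
  inc : ∀ i j : ℤ, 0 < i → i < j → w i < w j
  mem : ∀ y : ℕ, y ∈ S ↔ 0 < y ∧ 0 < w⁻¹ (-(y : ℤ))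

lemma SegB_inc {w : Equiv.Perm ℤ} : ∀ {b : List ℕ} {s : ℤ}, SegB w s b → b.Pairwise (· > ·) →
    ∀ i j : ℤ, s ≤ i → i < j → j < s + b.length → w i < w j := by
  intro b
  induction b with
  | nil => intro s _ _ i j h1 h2 h3; simp at h3; omega
  | cons a b ih =>
    intro s hs hp i j h1 h2 h3
    rw [List.pairwise_cons] at hp
    simp only [List.length_cons] at h3
    push_cast at h3
    by_cases h : i = s
    · subst h
      obtain ⟨x, hx, hj⟩ := SegB_get hs.2 j (by omega) (by omega)
      have := hp.1 x hx
      have := hs.1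
      omega
    · exact ih hs.2 hp.2 i j (by omega) h2 (by omega)

lemma GrB_of_RepB {M : ℕ} {w : Equiv.Perm ℤ} {b : List ℕ} (h : RepB M w b)
    (hp : b.Pairwise (· > ·)) : GrB M w b.toFinset := by
  obtain ⟨hw, hbpos, hseg, hpos, hinc⟩ := h
  refine ⟨hw, ?_, ?_⟩
  · intro i j hi hij
    by_cases h1 : i ≤ b.length
    · by_cases h2 : j ≤ b.length
      · exact SegB_inc hseg hp i j (by omega) hij (by omega)
      · obtain ⟨x, hx, hj⟩ := SegB_get hseg i (by omega) (by omega)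
        have := hpos j (by omega)
        omega
    · exact hinc i j (by omega) hij
  · intro y
    rw [List.mem_toFinset]
    constructor
    · intro hy
      refine ⟨hbpos y hy, ?_⟩
      obtain ⟨i, h1, h2, h3⟩ := SegB_mem hseg y hy
      rw [← h3, show w⁻¹ (w i) = i from by rw [Equiv.Perm.inv_eq_iff_eq]]
      omega
    · rintro ⟨h1, h2⟩
      obtain ⟨i, hi⟩ : ∃ i, w⁻¹ (-(y : ℤ)) = i := ⟨_, rfl⟩
      rw [hi] at h2
      rw [Equiv.Perm.inv_eq_iff_eq] at hi
      by_cases h3 : i ≤ b.length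
      · obtain ⟨x, hx, hj⟩ := SegB_get hseg i (by omega) (by omega)
        have : y = x := by omega
        rw [this]; exact hx
      · have := hpos i (by omega)
        omega

open Finset

section lag
open Polynomial

lemma prodX_coeff {ι : Type*} [DecidableEq ι] (a : ι → ℚ) (s : Finset ι) :
    (∀ m, s.card + 2 < m → (X ^ 2 * ∏ j ∈ s, (X - C (a j))).coeff m = 0) ∧
    (X ^ 2 * ∏ j ∈ s, (X - C (a j))).coeff (s.card + 2) = 1 ∧
    (X ^ 2 * ∏ j ∈ s, (X - C (a j))).coeff (s.card + 1) = -∑ j ∈ s, a j ∧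
    (X ^ 2 * ∏ j ∈ s, (X - C (a j))).coeff (s.card) =
      ((∑ j ∈ s, a j) ^ 2 - ∑ j ∈ s, a j ^ 2) / 2 := by
  induction s using Finset.induction_on with
  | empty =>
    simp only [prod_empty, mul_one, card_empty, coeff_X_pow, sum_empty]
    refine ⟨fun m hm => if_neg (by omega), by simp, by simp, by simp⟩
  | insert i s hi ih =>
    obtain ⟨h0, h1, h2, h3⟩ := ih
    have hc : ∀ m, (X ^ 2 * ∏ j ∈ insert i s, (X - C (a j))).coeff (m + 1) =
        (X ^ 2 * ∏ j ∈ s, (X - C (a j))).coeff m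
          - a i * (X ^ 2 * ∏ j ∈ s, (X - C (a j))).coeff (m + 1) := by
      intro m
      rw [prod_insert hi, show (X : ℚ[X]) ^ 2 * ((X - C (a i)) * ∏ j ∈ s, (X - C (a j))) =
        X * (X ^ 2 * ∏ j ∈ s, (X - C (a j))) - C (a i) * (X ^ 2 * ∏ j ∈ s, (X - C (a j))) by ring,
        coeff_sub, coeff_X_mul, coeff_C_mul]
    rw [card_insert_of_notMem hi, sum_insert hi, sum_insert hi]
    refine ⟨fun m hm => ?_, ?_, ?_, ?_⟩
    · obtain ⟨m, rfl⟩ : ∃ l, m = l + 1 := ⟨m - 1, by omega⟩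
      rw [hc, h0 m (by omega), h0 (m + 1) (by omega)]; ring
    · rw [show s.card + 1 + 2 = (s.card + 2) + 1 by ring, hc, h1, h0 _ (by omega)]; ring
    · rw [hc, h2, h1]; ring
    · rw [hc, h3, h2]; ring

lemma lag2 {ι : Type*} [DecidableEq ι] (s : Finset ι) (Y Z : ι → ℚ) (hY : Set.InjOn Y s) (β : ℚ) :
    ∑ i ∈ s, (Y i + β) * (∏ j ∈ s, (Y i - Z j)) / ∏ j ∈ s.erase i, (Y i - Y j) =
      ((∑ j ∈ s, Z j) ^ 2 - ∑ j ∈ s, Z j ^ 2) / 2 - β * ∑ j ∈ s, Z j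
      - ((∑ j ∈ s, Y j) ^ 2 - ∑ j ∈ s, Y j ^ 2) / 2
      + (β - ∑ j ∈ s, Z j + ∑ j ∈ s, Y j) * ∑ j ∈ s, Y j := by
  rcases s.eq_empty_or_nonempty with rfl | hs
  · simp
  have hn : 0 < s.card := hs.card_pos
  obtain ⟨p0, p1, p2, p3⟩ := prodX_coeff Z s
  obtain ⟨q0, q1, q2, q3⟩ := prodX_coeff Y s
  obtain ⟨α, hα⟩ : ∃ α, α = β - ∑ j ∈ s, Z j + ∑ j ∈ s, Y j := ⟨_, rfl⟩
  obtain ⟨R, hR⟩ : ∃ R : ℚ[X], R = (X + C β) * (∏ j ∈ s, (X - C (Z j))) -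
    (X + C α) * ∏ j ∈ s, (X - C (Y j)) := ⟨_, rfl⟩
  have hc : ∀ m, (X ^ 2 * R).coeff (m + 1) =
      (X ^ 2 * ∏ j ∈ s, (X - C (Z j))).coeff m + β * (X ^ 2 * ∏ j ∈ s, (X - C (Z j))).coeff (m + 1)
      - (X ^ 2 * ∏ j ∈ s, (X - C (Y j))).coeff m
      - α * (X ^ 2 * ∏ j ∈ s, (X - C (Y j))).coeff (m + 1) := by
    intro m
    rw [hR, show (X : ℚ[X]) ^ 2 * ((X + C β) * (∏ j ∈ s, (X - C (Z j))) -
      (X + C α) * ∏ j ∈ s, (X - C (Y j))) = X * (X ^ 2 * ∏ j ∈ s, (X - C (Z j)))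
       + C β * (X ^ 2 * ∏ j ∈ s, (X - C (Z j))) - X * (X ^ 2 * ∏ j ∈ s, (X - C (Y j)))
       - C α * (X ^ 2 * ∏ j ∈ s, (X - C (Y j))) by ring]
    simp only [coeff_sub, coeff_add, coeff_X_mul, coeff_C_mul]
  have hdeg : R.degree < s.card := by
    rw [degree_lt_iff_coeff_zero]
    intro m hm
    have hx : R.coeff m = (X ^ 2 * R).coeff (m + 1 + 1) := by
      rw [show m + 1 + 1 = m + 2 by ring, coeff_X_pow_mul]
    rw [hx, hc]
    rcases Nat.lt_or_ge (s.card + 1) m with h | h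
    · rw [p0 _ (by omega), p0 _ (by omega), q0 _ (by omega), q0 _ (by omega)]; ring
    · rcases Nat.lt_or_ge s.card m with h' | h'
      · have : m = s.card + 1 := by omega
        subst this
        rw [p0 (s.card + 1 + 1 + 1) (by omega), q0 (s.card + 1 + 1 + 1) (by omega),
          show s.card + 1 + 1 = s.card + 2 by ring, p1, q1]; ring
      · have : m = s.card := by omega
        subst this
        rw [show s.card + 1 + 1 = s.card + 2 by ring, p1, q1, p2, q2, hα]; ring
  have hL := Lagrange.coeff_eq_sum hY hdeg
  have hx : R.coeff (s.card - 1) = (X ^ 2 * R).coeff (s.card + 1) := by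
    rw [show s.card + 1 = (s.card - 1) + 2 by omega, coeff_X_pow_mul]
  rw [hx, hc, p2, p3, q2, q3] at hL
  rw [← hα]
  have hev : ∀ i ∈ s, R.eval (Y i) = (Y i + β) * ∏ j ∈ s, (Y i - Z j) := by
    intro i hi
    rw [hR]
    simp only [eval_sub, eval_mul, eval_add, eval_X, eval_C, eval_prod]
    rw [prod_eq_zero (f := fun j => Y i - Y j) hi (sub_self _)]
    ring
  have hfin : ∑ i ∈ s, (Y i + β) * (∏ j ∈ s, (Y i - Z j)) / ∏ j ∈ s.erase i, (Y i - Y j) =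
      ∑ i ∈ s, R.eval (Y i) / ∏ j ∈ s.erase i, (Y i - Y j) :=
    sum_congr rfl (fun i hi => by rw [hev i hi])
  rw [hfin, ← hL]; ring

lemma lag1 {ι : Type*} [DecidableEq ι] (s : Finset ι) (Y Z : ι → ℚ) (hY : Set.InjOn Y s) :
    ∑ i ∈ s, (∏ j ∈ s, (Y i - Z j)) / ∏ j ∈ s.erase i, (Y i - Y j) =
      ∑ j ∈ s, Y j - ∑ j ∈ s, Z j := by
  have h1 := lag2 s Y Z hY 1
  have h0 := lag2 s Y Z hY 0
  have : ∑ i ∈ s, (∏ j ∈ s, (Y i - Z j)) / ∏ j ∈ s.erase i, (Y i - Y j) =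
    ∑ i ∈ s, (Y i + 1) * (∏ j ∈ s, (Y i - Z j)) / (∏ j ∈ s.erase i, (Y i - Y j)) -
    ∑ i ∈ s, (Y i + 0) * (∏ j ∈ s, (Y i - Z j)) / ∏ j ∈ s.erase i, (Y i - Y j) := by
    rw [← sum_sub_distrib]
    apply sum_congr rfl
    intro i _
    ring
  rw [this, h1, h0]
  ring

end lag

/-- general shifted identity -/
lemma shift_prod (S : Finset ℕ) (d : ℚ) {x : ℕ} (hx : x ∈ S) :
    (∏ y ∈ S, ((x : ℚ) * (x - d) - y * (y + d))) / ∏ y ∈ S.erase x, ((x : ℚ) * (x - d) - y * (y - d)) =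
    -2 * d * x * ∏ y ∈ S.erase x, (((x : ℚ) - d - y) * (x + y) / ((x - d + y) * (x - y))) := by
  rw [← mul_prod_erase _ _ hx, mul_div_assoc, ← prod_div_distrib]
  congr 1
  · ring
  · apply prod_congr rfl
    intro y _
    congr 1 <;> ring

lemma ident1 (S : Finset ℕ) (hS : ∀ x ∈ S, 0 < x) :
    ∑ x ∈ S, (x : ℚ) * ∏ y ∈ S.erase x, (((x : ℚ) - 1 - y) * (x + y) / ((x - 1 + y) * (x - y))) =
      ∑ x ∈ S, (x : ℚ) := by
  have h := lag1 S (fun x => (x : ℚ) * (x - 1)) (fun x => (x : ℚ) * (x + 1)) (by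
    intro x hx y hy hxy
    simp only at hxy
    have h1 := hS x hx
    have h2 := hS y hy
    have h3 : ((x : ℚ) - y) * (x + y - 1) = 0 := by linarith
    rcases mul_eq_zero.1 h3 with h | h
    · exact_mod_cast sub_eq_zero.1 h
    · have : ((1 : ℕ) : ℚ) ≤ x := by exact_mod_cast h1
      have : ((1 : ℕ) : ℚ) ≤ y := by exact_mod_cast h2
      push_cast at *
      linarith)
  rw [sum_congr rfl (fun x hx => shift_prod S 1 hx), ← sum_sub_distrib] at h
  have h2 : ∑ x ∈ S, ((x : ℚ) * (x - 1) - x * (x + 1)) = -2 * ∑ x ∈ S, (x : ℚ) := by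
    rw [mul_sum]; apply sum_congr rfl; intro x _; ring
  have h3 : ∑ x ∈ S, -2 * 1 * (x : ℚ) * ∏ y ∈ S.erase x, (((x : ℚ) - 1 - y) * (x + y) / ((x - 1 + y) * (x - y)))
      = -2 * ∑ x ∈ S, (x : ℚ) * ∏ y ∈ S.erase x, (((x : ℚ) - 1 - y) * (x + y) / ((x - 1 + y) * (x - y))) := by
    rw [mul_sum]; apply sum_congr rfl; intro x _; ring
  rw [h2, h3] at h
  linarith

lemma ident3 (S : Finset ℕ) (hS : ∀ x ∈ S, Odd x) :
    ∑ x ∈ S, (x : ℚ) * (x - 1) * (x - 2) *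
      ∏ y ∈ S.erase x, (((x : ℚ) - 3 - y) * (x + y) / ((x - 3 + y) * (x - y))) =
      ∑ x ∈ S, (x : ℚ) ^ 3 + 2 * ∑ x ∈ S, (x : ℚ) - 3 * (∑ x ∈ S, (x : ℚ)) ^ 2 := by
  have h := lag2 S (fun x => (x : ℚ) * (x - 3)) (fun x => (x : ℚ) * (x + 3)) (by
    intro x hx y hy hxy
    simp only at hxy
    have h1 := hS x hx
    have h2 := hS y hy
    have h3 : ((x : ℚ) - y) * (x + y - 3) = 0 := by linarith
    rcases mul_eq_zero.1 h3 with h | h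
    · exact_mod_cast sub_eq_zero.1 h
    · have : x + y = 3 := by
        have : (x : ℚ) + y = (3 : ℕ) := by push_cast; linarith
        exact_mod_cast this
      obtain ⟨a, rfl⟩ := h1
      obtain ⟨b, rfl⟩ := h2
      omega) 2
  have e1 : ∑ x ∈ S, (x : ℚ) * (x - 3) = ∑ x ∈ S, (x : ℚ) ^ 2 - 3 * ∑ x ∈ S, (x : ℚ) := by
    rw [mul_sum, ← sum_sub_distrib]; apply sum_congr rfl; intro x _; ring
  have e2 : ∑ x ∈ S, (x : ℚ) * (x + 3) = ∑ x ∈ S, (x : ℚ) ^ 2 + 3 * ∑ x ∈ S, (x : ℚ) := by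
    rw [mul_sum, ← sum_add_distrib]; apply sum_congr rfl; intro x _; ring
  have e3 : ∑ x ∈ S, ((x : ℚ) * (x + 3)) ^ 2 = ∑ x ∈ S, ((x : ℚ) * (x - 3)) ^ 2
      + 12 * ∑ x ∈ S, (x : ℚ) ^ 3 := by
    rw [mul_sum, ← sum_add_distrib]; apply sum_congr rfl; intro x _; ring
  have e4 : ∑ x ∈ S, ((x : ℚ) * (x - 3) + 2) * (∏ y ∈ S, ((x : ℚ) * (x - 3) - y * (y + 3))) /
      ∏ y ∈ S.erase x, ((x : ℚ) * (x - 3) - y * (y - 3)) =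
      -6 * ∑ x ∈ S, (x : ℚ) * (x - 1) * (x - 2) *
      ∏ y ∈ S.erase x, (((x : ℚ) - 3 - y) * (x + y) / ((x - 3 + y) * (x - y))) := by
    rw [mul_sum]; apply sum_congr rfl; intro x hx
    rw [mul_div_assoc, shift_prod S 3 hx]
    ring
  rw [e1, e2, e3, e4] at h
  linear_combination (-1/6) * h

/-- product formula for the number of standard shifted tableaux, without the factorial -/
noncomputable def hB (S : Finset ℕ) : ℚ :=
  (∏ x ∈ S, (1 / (x.factorial : ℚ))) *
    ∏ x ∈ S, ∏ y ∈ S, if y < x then |(x : ℚ) - y| / (x + y) else 1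

lemma hB_insert {a : ℕ} {T : Finset ℕ} (ha : a ∉ T) :
    hB (insert a T) = hB T * (1 / (a.factorial : ℚ) * ∏ y ∈ T, |(a : ℚ) - y| / (a + y)) := by
  unfold hB
  rw [prod_insert ha, prod_insert ha, prod_insert ha, if_neg (lt_irrefl _),
    prod_congr rfl (fun x _ => prod_insert ha), prod_mul_distrib]
  have : ∏ y ∈ T, |(a : ℚ) - y| / (a + y) =
      (∏ y ∈ T, if y < a then |(a : ℚ) - y| / (a + y) else 1) *
      ∏ y ∈ T, if a < y then |(y : ℚ) - a| / (y + a) else 1 := by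
    rw [← prod_mul_distrib]
    apply prod_congr rfl
    intro y hy
    have hne : y ≠ a := by rintro rfl; exact ha hy
    rcases lt_or_gt_of_ne hne with h | h
    · rw [if_pos h, if_neg (by omega), mul_one]
    · rw [if_neg (by omega), if_pos h, one_mul, abs_sub_comm, add_comm]
  rw [this]
  ring

open Finset

/-- the insertion factor -/
noncomputable def gB (a : ℕ) (T : Finset ℕ) : ℚ :=
  1 / (a.factorial : ℚ) * ∏ y ∈ T, |(a : ℚ) - y| / (a + y)

lemma gB_shift {u : ℕ} {T : Finset ℕ} (hT : ∀ y ∈ T, 0 < y ∧ y ≠ u + 1) :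
    gB u T = gB (u + 1) T * (((u + 1 : ℕ) : ℚ) *
      ∏ y ∈ T, ((((u + 1 : ℕ) : ℚ) - 1 - y) * ((u + 1 : ℕ) + y) /
        ((((u + 1 : ℕ) : ℚ) - 1 + y) * ((u + 1 : ℕ) - y)))) := by
  unfold gB
  have h1 : ∏ y ∈ T, |(u : ℚ) - y| / (u + y) = (∏ y ∈ T, |((u + 1 : ℕ) : ℚ) - y| / ((u + 1 : ℕ) + y)) *
      ∏ y ∈ T, ((((u + 1 : ℕ) : ℚ) - 1 - y) * ((u + 1 : ℕ) + y) /
        ((((u + 1 : ℕ) : ℚ) - 1 + y) * ((u + 1 : ℕ) - y))) := by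
    rw [← prod_mul_distrib]
    apply prod_congr rfl
    intro y hy
    obtain ⟨h0, hne⟩ := hT y hy
    have h0' : (0 : ℚ) < y := by exact_mod_cast h0
    have hu : (0 : ℚ) ≤ u := by positivity
    push_cast
    have hne' : (u : ℚ) + 1 - y ≠ 0 := by
      intro h
      apply hne
      have : (y : ℚ) = ((u + 1 : ℕ) : ℚ) := by push_cast; linarith
      exact_mod_cast this
    have a1 : (u : ℚ) + y ≠ 0 := by positivity
    have a2 : (u : ℚ) + 1 + y ≠ 0 := by positivity
    have a3 : (u : ℚ) + 1 - 1 + y ≠ 0 := by rw [add_sub_cancel_right]; exact a1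
    rcases Nat.lt_or_ge u y with h | h
    · have h' : (u : ℚ) + 1 ≤ y := by exact_mod_cast h
      rw [abs_of_nonpos (by linarith), abs_of_nonpos (by linarith)]
      field_simp
      ring
    · have h' : (y : ℚ) ≤ u := by exact_mod_cast h
      rw [abs_of_nonneg (by linarith), abs_of_nonneg (by linarith)]
      field_simp
      ring
  rw [h1, Nat.factorial_succ]
  have := Nat.factorial_ne_zero u
  push_cast
  have h2 : (u : ℚ) + 1 ≠ 0 := by positivity
  have h3 : (u.factorial : ℚ) ≠ 0 := by exact_mod_cast this
  field_simp

lemma gB_zero {T : Finset ℕ} (hT : ∀ y ∈ T, 0 < y) : gB 0 T = 1 := by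
  unfold gB
  rw [prod_eq_one]
  · simp
  · intro y hy
    have h0' : (0 : ℚ) < y := by exact_mod_cast hT y hy
    push_cast
    rw [zero_sub, abs_neg, abs_of_pos h0', zero_add, div_self h0'.ne']

lemma gB_mem {u : ℕ} {T : Finset ℕ} (h : u ∈ T) : gB u T = 0 := by
  unfold gB
  rw [prod_eq_zero h]
  · simp
  · simp

lemma GrB.lower {N : ℕ} {w : Equiv.Perm ℤ} {S : Finset ℕ} (h : GrB N w S) {k : ℕ} (hk : k < N)
    (hd : w⁻¹ (k + 1) < w⁻¹ (loB k)) :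
    k + 1 ∈ S ∧ k ∉ S ∧ GrB N (sB k * w) ((insert k (S.erase (k + 1))).erase 0) := by
  obtain ⟨hw, hinc, hmem⟩ := h
  have hlo := loB_cases k
  obtain ⟨i, hi⟩ : ∃ i, w⁻¹ (k + 1) = i := ⟨_, rfl⟩
  obtain ⟨j, hj⟩ : ∃ j, w⁻¹ (loB k) = j := ⟨_, rfl⟩
  have hni : w⁻¹ (-((k : ℤ) + 1)) = -i := by rw [hw.inv.1, hi]
  have hnj : w⁻¹ (-loB k) = -j := by rw [hw.inv.1, hj]
  rw [hi, hj] at hd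
  have wi : w i = k + 1 := by rw [← hi]; simp
  have wj : w j = loB k := by rw [← hj]; simp
  have wni : w (-i) = -((k : ℤ) + 1) := by rw [hw.1, wi]
  have wnj : w (-j) = -loB k := by rw [hw.1, wj]
  have hi0 : i ≠ 0 := by rintro rfl; rw [hw.zero] at wi; omega
  have hj0 : j ≠ 0 := by rintro rfl; rw [hw.zero] at wj; omega
  have hineg : i < 0 := by
    by_contra hc
    have := hinc i j (by omega) hd
    omega
  have hjpos : 0 < j := by
    by_contra hc
    have := hinc (-j) (-i) (by omega) (by omega)
    omega
  have m1 : k + 1 ∈ S := by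
    rw [hmem]; push_cast; rw [hni]; omega
  have m2 : k ∉ S := by
    rw [hmem]
    rintro ⟨a, b⟩
    rw [show (k : ℤ) = loB k by omega, hnj] at b
    omega
  refine ⟨m1, m2, (InB.sB hk).mul hw, ?_, ?_⟩
  · intro p q hp hpq
    have hpq' := hinc p q hp hpq
    rw [Equiv.Perm.mul_apply, Equiv.Perm.mul_apply,
      sB_mono k (hw.ne_zero (by omega)) (hw.ne_zero (by omega))]
    · exact hpq'
    intro hs
    have h2 : (w p = w j ∧ w q = w i) ∨ (w p = w (-i) ∧ w q = w (-j)) := by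
      rw [wi, wj, wni, wnj]
      rw [sB_apply] at hs
      split_ifs at hs <;> omega
    simp only [w.injective.eq_iff] at h2
    omega
  · intro y
    have hinv : (sB k * w)⁻¹ (-(y : ℤ)) = w⁻¹ (sB k (-(y : ℤ))) := by
      rw [Equiv.Perm.inv_eq_iff_eq, Equiv.Perm.mul_apply]
      have : w (w⁻¹ (sB k (-(y : ℤ)))) = sB k (-(y : ℤ)) := by simp
      rw [this, sB_sB]
    rw [hinv, mem_erase, mem_insert, mem_erase]
    by_cases hy0 : y = 0
    · subst hy0; simp
    by_cases hy1 : y = k + 1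
    · subst hy1
      have : sB k (-((k + 1 : ℕ) : ℤ)) = -loB k := by
        rw [sB_apply]; push_cast; split_ifs <;> omega
      rw [this, hnj]
      simp; omega
    by_cases hy2 : y = k
    · subst hy2
      have : sB y (-(y : ℤ)) = -((y : ℤ) + 1) := by
        rw [sB_apply]; split_ifs <;> omega
      rw [this, hni]
      simp [hy0]; omega
    · have : sB k (-(y : ℤ)) = -(y : ℤ) := by
        rw [sB_apply]; split_ifs <;> omega
      rw [this, hmem]
      simp [hy0, hy1, hy2]

lemma GrB.desc {N : ℕ} {w : Equiv.Perm ℤ} {S : Finset ℕ} (h : GrB N w S) {k : ℕ}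
    (h1 : k + 1 ∈ S) (h2 : k ∉ S) : k < N ∧ w⁻¹ (k + 1) < w⁻¹ (loB k) := by
  obtain ⟨hw, hinc, hmem⟩ := h
  have hlo := loB_cases k
  rw [hmem] at h1 h2
  have hi := h1.2
  push_cast at hi
  rw [hw.inv.1] at hi
  rw [hw.inv.1] at h2
  constructor
  · by_contra hc
    rw [hw.inv.2 _ (by omega)] at hi
    omega
  · rcases hlo with ⟨rfl, hl⟩ | ⟨hk, hl⟩
    · rw [hl, hw.inv.1]
      simp only [Nat.cast_zero, zero_add] at hi ⊢
      omega
    · rw [hl]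
      have : w⁻¹ (k : ℤ) ≠ 0 := hw.inv.ne_zero (by omega)
      omega

lemma GrB.formula {N : ℕ} : ∀ (L : ℕ) {w : Equiv.Perm ℤ} {S : Finset ℕ}, GrB N w S →
    ellB N w = L → ∑ x ∈ S, x = L ∧ (aB N w : ℚ) = L.factorial * hB S := by
  intro L
  induction L with
  | zero =>
    intro w S h hL
    have hw := eq_one_of_ellB h.inB hL
    subst hw
    have : S = ∅ := by
      ext y
      rw [h.mem]
      simp
    subst this
    rw [aB, hL]
    simp [cntB, hB]
  | succ L ih =>
    intro w S h hL
    have hSpos : ∀ x ∈ S, 0 < x := fun x hx => ((h.mem x).1 hx).1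
    have hterm : ∀ k, k + 1 ∈ S → k ∉ S → ∑ x ∈ S, x = L + 1 ∧
        (cntB N L (sB k * w) : ℚ) = L.factorial * (hB (S.erase (k + 1)) * gB k (S.erase (k + 1))) := by
      intro k h1 h2
      obtain ⟨hk, hd⟩ := h.desc h1 h2
      have hG := (h.lower hk hd).2.2
      have he := ellB_desc h.inB hk hd
      have he' : ellB N (sB k * w) = L := by omega
      obtain ⟨a1, a2⟩ := ih hG he'
      rw [aB, he'] at a2
      have hkT : k ∉ S.erase (k + 1) := fun hh => h2 (mem_of_mem_erase hh)
      have h0T : 0 ∉ S.erase (k + 1) := fun hh => by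
        have := hSpos 0 (mem_of_mem_erase hh); omega
      have hsum := add_sum_erase S (fun x => x) h1
      rw [a2]
      by_cases hk0 : k = 0
      · subst hk0
        rw [erase_insert h0T] at a1 ⊢
        refine ⟨by omega, ?_⟩
        rw [gB_zero (fun y hy => hSpos y (mem_of_mem_erase hy)), mul_one]
      · have h0 : 0 ∉ insert k (S.erase (k + 1)) := by
          rw [mem_insert]; push Not; exact ⟨fun hh => hk0 hh.symm, h0T⟩
        rw [erase_eq_of_notMem h0] at a1 ⊢
        rw [sum_insert hkT] at a1
        refine ⟨by omega, ?_⟩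
        rw [hB_insert hkT]; rfl
    have hsumS : ∑ x ∈ S, x = L + 1 := by
      obtain ⟨k, hk, hd⟩ := exists_desc h.inB (by omega)
      obtain ⟨b1, b2, _⟩ := h.lower hk hd
      exact (hterm k b1 b2).1
    refine ⟨hsumS, ?_⟩
    have hcount : (cntB N (L + 1) w : ℚ) =
        ∑ x ∈ S, (L.factorial : ℚ) * (hB (S.erase x) * gB (x - 1) (S.erase x)) := by
      rw [cntB_succ]
      push_cast
      have hzero : ∀ k ∈ range N, ¬ (k + 1 ∈ S ∧ k ∉ S) → (cntB N L (sB k * w) : ℚ) = 0 := by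
        intro k hk hn
        rw [mem_range] at hk
        rcases ellB_sB h.inB hk with ⟨hd, _⟩ | ⟨_, hd⟩
        · obtain ⟨b1, b2, _⟩ := h.lower hk hd
          exact absurd ⟨b1, b2⟩ hn
        · rw [cntB_zero_of_lt _ ((InB.sB hk).mul h.inB) (by omega)]; rfl
      have hzero2 : ∀ x ∈ S, ¬ (x - 1 ∉ S) →
          (L.factorial : ℚ) * (hB (S.erase x) * gB (x - 1) (S.erase x)) = 0 := by
        intro x hx hn
        push Not at hn
        have := hSpos x hx
        rw [gB_mem (mem_erase.2 ⟨by omega, hn⟩)]; ring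
      rw [← sum_filter_of_ne (s := range N) (p := fun k => k + 1 ∈ S ∧ k ∉ S)
        (fun k hk hne => by by_contra hc; exact hne (hzero k hk hc)),
        ← sum_filter_of_ne (s := S) (p := fun x => x - 1 ∉ S)
        (fun x hx hne hc => hne (hzero2 x hx (not_not.2 hc)))]
      refine sum_nbij (fun k => k + 1) ?_ ?_ ?_ ?_
      · intro k hk
        rw [mem_filter] at hk ⊢
        exact ⟨hk.2.1, by simpa using hk.2.2⟩
      · intro a _ b _ hab
        simpa using hab
      · intro x hx
        rw [mem_coe, mem_filter] at hx
        have := hSpos x hx.1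
        have e : x - 1 + 1 = x := by omega
        refine ⟨x - 1, ?_, e⟩
        rw [mem_coe, mem_filter, mem_range]
        have h1 : x - 1 + 1 ∈ S := by rw [e]; exact hx.1
        exact ⟨(h.desc h1 hx.2).1, h1, hx.2⟩
      · intro k hk
        rw [mem_filter] at hk
        rw [(hterm k hk.2.1 hk.2.2).2]
        simp
    rw [aB, hL, hcount]
    have hx : ∀ x ∈ S, (L.factorial : ℚ) * (hB (S.erase x) * gB (x - 1) (S.erase x)) =
        (L.factorial : ℚ) * hB S * ((x : ℚ) * ∏ y ∈ S.erase x, (((x : ℚ) - 1 - y) * (x + y) / ((x - 1 + y) * (x - y)))) := by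
      intro x hx
      obtain ⟨u, rfl⟩ : ∃ u, x = u + 1 := ⟨x - 1, by have := hSpos x hx; omega⟩
      rw [Nat.add_sub_cancel, gB_shift (T := S.erase (u + 1)) (fun y hy =>
        ⟨hSpos y (mem_of_mem_erase hy), (mem_erase.1 hy).1⟩)]
      have h1 : hB S = hB (S.erase (u + 1)) * gB (u + 1) (S.erase (u + 1)) := by
        conv_lhs => rw [← insert_erase hx]
        rw [hB_insert (notMem_erase _ _)]; rfl
      rw [h1]
      ring
    rw [sum_congr rfl hx, ← mul_sum, ident1 S hSpos, ← Nat.cast_sum, hsumS, Nat.factorial_succ]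
    push_cast
    ring

open Finset

/-- the set of the first `n` odd numbers -/
def oddB (n : ℕ) : Finset ℕ := (odB n).toFinset

lemma mem_oddB {n a : ℕ} : a ∈ oddB n ↔ ∃ i < n, a = 2 * i + 1 := by
  rw [oddB, List.mem_toFinset, mem_odB]

lemma oddB_succ (n : ℕ) : oddB (n + 1) = insert (2 * n + 1) (oddB n) := by
  simp [oddB, odB]

lemma notMem_oddB (n : ℕ) : 2 * n + 1 ∉ oddB n := by
  rw [mem_oddB]; rintro ⟨i, h1, h2⟩; omega

lemma sum_oddB (f : ℕ → ℚ) (n : ℕ) : ∑ x ∈ oddB n, f x = ∑ j ∈ range n, f (2 * j + 1) := by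
  induction n with
  | zero => simp [oddB, odB]
  | succ n ih => rw [oddB_succ, sum_insert (notMem_oddB n), ih, sum_range_succ]; ring

lemma sum1_oddB (n : ℕ) : ∑ x ∈ oddB n, x = n ^ 2 := by
  induction n with
  | zero => simp [oddB, odB]
  | succ n ih => rw [oddB_succ, sum_insert (notMem_oddB n), ih]; ring

lemma sum1_oddB' (n : ℕ) : ∑ x ∈ oddB n, (x : ℚ) = (n : ℚ) ^ 2 := by
  rw [← Nat.cast_sum, sum1_oddB, Nat.cast_pow]

lemma sum3_oddB (n : ℕ) : ∑ x ∈ oddB n, (x : ℚ) ^ 3 = (n : ℚ) ^ 2 * (2 * n ^ 2 - 1) := by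
  induction n with
  | zero => simp [oddB, odB]
  | succ n ih => rw [oddB_succ, sum_insert (notMem_oddB n), ih]; push_cast; ring

/-- terms of the final sum -/
noncomputable def tauB (n x : ℕ) : ℚ := (x : ℚ) * (x - 1) * (x - 2) *
      ∏ y ∈ (oddB n).erase x, (((x : ℚ) - 3 - y) * (x + y) / ((x - 3 + y) * (x - y)))

lemma tauB_sum (n : ℕ) : ∑ x ∈ oddB n, tauB n x = (n : ℚ) ^ 2 - n ^ 4 := by
  have := ident3 (oddB n) (by
    intro x hx
    rw [mem_oddB] at hx
    obtain ⟨i, _, rfl⟩ := hx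
    exact ⟨i, rfl⟩)
  rw [sum1_oddB', sum3_oddB] at this
  unfold tauB
  rw [this]; ring

lemma tauB_one (n : ℕ) : tauB n 1 = 0 := by simp [tauB]

lemma tauB_three (m : ℕ) : tauB (m + 2) 3 = -2 * ((m : ℚ) + 2) * ((m + 2) ^ 2 - 1) := by
  unfold tauB
  have : ∏ y ∈ (oddB (m + 2)).erase 3,
      ((((3 : ℕ) : ℚ) - 3 - y) * ((3 : ℕ) + y) / ((((3 : ℕ) : ℚ) - 3 + y) * ((3 : ℕ) - y))) =
      -((m : ℚ) + 2) * ((m + 2) ^ 2 - 1) / 3 := by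
    induction m with
    | zero =>
      have : (oddB (0 + 2)).erase 3 = {1} := by decide
      rw [this, prod_singleton]
      norm_num
    | succ m ih =>
      have : (oddB (m + 1 + 2)).erase 3 = insert (2 * (m + 2) + 1) ((oddB (m + 2)).erase 3) := by
        rw [show m + 1 + 2 = (m + 2) + 1 by ring, oddB_succ, erase_insert_of_ne (by omega)]
      rw [this, prod_insert (fun h => notMem_oddB _ (mem_of_mem_erase h)), ih]
      push_cast
      have a1 : (2 * ((m : ℚ) + 2) + 1) ≠ 0 := by positivity
      have a2 : ((m : ℚ) + 1) ≠ 0 := by positivity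
      have a3 : ((3 : ℚ) - 3 + (2 * ((m : ℚ) + 2) + 1)) * (3 - (2 * ((m : ℚ) + 2) + 1)) =
        -2 * (2 * ((m : ℚ) + 2) + 1) * (m + 1) := by ring
      rw [a3]
      field_simp
      ring
  rw [this]
  push_cast
  ring

lemma gB_shift3 {u : ℕ} {T : Finset ℕ} (hu : Even u) (hT : ∀ y ∈ T, Odd y ∧ y ≠ u + 3)
    (hm : u + 1 ∈ T) :
    gB u T = - (gB (u + 3) T * (((u + 3 : ℕ) : ℚ) * (((u + 3 : ℕ) : ℚ) - 1) * (((u + 3 : ℕ) : ℚ) - 2) *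
      ∏ y ∈ T, ((((u + 3 : ℕ) : ℚ) - 3 - y) * ((u + 3 : ℕ) + y) /
        ((((u + 3 : ℕ) : ℚ) - 3 + y) * ((u + 3 : ℕ) - y))))) := by
  unfold gB
  have h1 : ∏ y ∈ T, |(u : ℚ) - y| / (u + y) =
      (∏ y ∈ T, if u + 1 = y then (-1 : ℚ) else 1) *
      ((∏ y ∈ T, |((u + 3 : ℕ) : ℚ) - y| / ((u + 3 : ℕ) + y)) *
      ∏ y ∈ T, ((((u + 3 : ℕ) : ℚ) - 3 - y) * ((u + 3 : ℕ) + y) /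
        ((((u + 3 : ℕ) : ℚ) - 3 + y) * ((u + 3 : ℕ) - y)))) := by
    rw [← prod_mul_distrib, ← prod_mul_distrib]
    apply prod_congr rfl
    intro y hy
    obtain ⟨h0, hne⟩ := hT y hy
    have h0' : (0 : ℚ) < y := by exact_mod_cast h0.pos
    have hu' : (0 : ℚ) ≤ u := by positivity
    push_cast
    have hne' : (u : ℚ) + 3 - y ≠ 0 := by
      intro h
      apply hne
      have : (y : ℚ) = ((u + 3 : ℕ) : ℚ) := by push_cast; linarith
      exact_mod_cast this
    have a1 : (u : ℚ) + y ≠ 0 := by positivity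
    have a2 : (u : ℚ) + 3 + y ≠ 0 := by positivity
    have a3 : (u : ℚ) + 3 - 3 + y ≠ 0 := by rw [add_sub_cancel_right]; exact a1
    obtain ⟨c, hc⟩ := hu
    obtain ⟨d, hd⟩ := h0
    split_ifs with h
    · have h' : (y : ℚ) = u + 1 := by rw [← h]; push_cast; ring
      rw [abs_of_nonpos (by linarith), abs_of_nonneg (by linarith)]
      field_simp
      ring
    · rcases Nat.lt_or_ge u y with h | h
      · have h' : (u : ℚ) + 3 ≤ y := by
          have : u + 3 ≤ y := by omega
          exact_mod_cast this
        rw [abs_of_nonpos (by linarith), abs_of_nonpos (by linarith)]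
        field_simp
        ring
      · have h' : (y : ℚ) ≤ u := by exact_mod_cast h
        rw [abs_of_nonneg (by linarith), abs_of_nonneg (by linarith)]
        field_simp
        ring
  rw [h1, prod_ite_eq, if_pos hm, Nat.factorial_succ, Nat.factorial_succ, Nat.factorial_succ]
  have := Nat.factorial_ne_zero u
  push_cast
  have h2 : (u : ℚ) + 1 ≠ 0 := by positivity
  have h2' : (u : ℚ) + 1 + 1 ≠ 0 := by positivity
  have h2'' : (u : ℚ) + 2 + 1 ≠ 0 := by positivity
  have h3 : (u.factorial : ℚ) ≠ 0 := by exact_mod_cast this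
  field_simp
  ring

lemma wk_set (i t : ℕ) :
    ((odB t).map (· + (2 * i + 6)) ++ ([2 * i + 3, 2 * i + 2, 2 * i + 1] ++ odB i)).toFinset =
      insert (2 * i + 2) ((oddB (i + 3 + t)).erase (2 * i + 5)) := by
  ext a
  simp only [List.mem_toFinset, List.mem_append, List.mem_map, List.mem_cons, List.not_mem_nil,
    or_false, mem_odB, mem_insert, mem_erase, mem_oddB]
  constructor
  · rintro (⟨b, ⟨j, h1, rfl⟩, rfl⟩ | (rfl | rfl | rfl) | ⟨j, h1, rfl⟩)
    · exact Or.inr ⟨by omega, j + i + 3, by omega, by omega⟩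
    · exact Or.inr ⟨by omega, i + 1, by omega, by omega⟩
    · exact Or.inl rfl
    · exact Or.inr ⟨by omega, i, by omega, by omega⟩
    · exact Or.inr ⟨by omega, j, by omega, by omega⟩
  · rintro (rfl | ⟨h1, j, h2, rfl⟩)
    · exact Or.inr (Or.inl (Or.inr (Or.inl rfl)))
    · rcases Nat.lt_or_ge j i with h | h
      · exact Or.inr (Or.inr ⟨j, h, rfl⟩)
      by_cases h3 : j = i
      · subst h3; exact Or.inr (Or.inl (Or.inr (Or.inr rfl)))
      by_cases h4 : j = i + 1
      · subst h4; exact Or.inr (Or.inl (Or.inl (by omega)))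
      · exact Or.inl ⟨2 * (j - i - 3) + 1, ⟨j - i - 3, by omega, rfl⟩, by omega⟩

lemma wk_pw (i t : ℕ) :
    ((odB t).map (· + (2 * i + 6)) ++ ([2 * i + 3, 2 * i + 2, 2 * i + 1] ++ odB i)).Pairwise
      (· > ·) := by
  rw [List.pairwise_append, List.pairwise_append]
  refine ⟨map_pw (odB_pw t) _, ⟨by simp, odB_pw i, ?_⟩, ?_⟩
  · intro a ha b hb
    rw [mem_odB] at hb
    obtain ⟨j, h1, rfl⟩ := hb
    simp only [List.mem_cons, List.not_mem_nil, or_false] at ha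
    omega
  · intro a ha b hb
    rw [List.mem_map] at ha
    obtain ⟨c, hc, rfl⟩ := ha
    simp only [List.mem_append, List.mem_cons, List.not_mem_nil, or_false, mem_odB] at hb
    rcases hb with (h | h | h) | ⟨j, h1, rfl⟩ <;> omega

lemma RepB.count {M : ℕ} {w : Equiv.Perm ℤ} {b : List ℕ} (h : RepB M w b)
    (hp : b.Pairwise (· > ·)) :
    (aB (M + 1) w : ℚ) = ((∑ x ∈ b.toFinset, x).factorial : ℚ) * hB b.toFinset := by
  obtain ⟨a, b, c⟩ := GrB_of_RepB h hp
  have hG : GrB (M + 1) w _ := ⟨a.mono (by omega), b, c⟩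
  obtain ⟨h1, h2⟩ := hG.formula _ rfl
  rw [h2, h1]

lemma card_w0 (n : ℕ) : (Nat.card ↥(RSet n (w0B n)) : ℚ) = ((n ^ 2).factorial : ℚ) * hB (oddB n) := by
  rw [card_RSet' (InB_w0B n) (show n ≤ 2 * n + 1 by omega)]
  obtain ⟨w', h1, h2⟩ := eqv_w0 (le_refl (2 * n)) _ (RepB_w0B (show n ≤ 2 * n by omega))
  rw [← h2, h1.count (odB_pw n)]
  rw [show (odB n).toFinset = oddB n from rfl, sum1_oddB]

lemma card_wk {i t : ℕ} {w : Equiv.Perm ℤ} (h : ∀ x : ℤ, w x = wkFun (i + 3 + t) (i + 1) x) :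
    (Nat.card ↥(RSet (i + 3 + t) w) : ℚ) = (((i + 3 + t) ^ 2 - 3).factorial : ℚ) *
      hB (insert (2 * i + 2) ((oddB (i + 3 + t)).erase (2 * i + 5))) := by
  rw [card_RSet' (InB_wk (by omega) (by omega) h)
    (show i + 3 + t ≤ (4 * (i + t) + 20) + 1 by omega)]
  obtain ⟨w', h1, h2⟩ := eqv_wk (le_refl (4 * (i + t) + 20)) _
    (RepB_wk (show i + 3 + t ≤ 4 * (i + t) + 20 by omega) h)
  rw [← h2, h1.count (wk_pw i t), wk_set]
  have hm : 2 * i + 5 ∈ oddB (i + 3 + t) := by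
    rw [mem_oddB]; exact ⟨i + 2, by omega, by omega⟩
  have hn : 2 * i + 2 ∉ (oddB (i + 3 + t)).erase (2 * i + 5) := by
    rw [mem_erase, mem_oddB]; rintro ⟨_, j, _, h⟩; omega
  have hs := add_sum_erase _ (fun x => x) hm
  rw [sum1_oddB] at hs
  rw [sum_insert hn]
  congr 3
  omega

lemma card_ratio {i t : ℕ} {w : Equiv.Perm ℤ} (h : ∀ x : ℤ, w x = wkFun (i + 3 + t) (i + 1) x)
    {n : ℕ} (hn : n = i + 3 + t) :
    (Nat.card ↥(RSet n w) : ℚ) * ((n : ℚ) ^ 2 * (n ^ 2 - 1) * (n ^ 2 - 2)) =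
      -(Nat.card ↥(RSet n (w0B n)) : ℚ) * tauB n (2 * i + 5) := by
  have hm : 2 * i + 5 ∈ oddB n := by
    rw [mem_oddB]; exact ⟨i + 2, by omega, by omega⟩
  have hn2 : 2 * i + 2 ∉ (oddB n).erase (2 * i + 5) := by
    rw [mem_erase, mem_oddB]; rintro ⟨_, j, _, h⟩; omega
  have c1 := card_wk h
  rw [← hn] at c1
  have h0 : hB (oddB n) = hB ((oddB n).erase (2 * i + 5)) * gB (2 * i + 5) ((oddB n).erase (2 * i + 5)) := by
    conv_lhs => rw [← insert_erase hm]
    rw [hB_insert (notMem_erase _ _)]; rfl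
  have h1 : hB (insert (2 * i + 2) ((oddB n).erase (2 * i + 5))) =
      hB ((oddB n).erase (2 * i + 5)) * gB (2 * i + 2) ((oddB n).erase (2 * i + 5)) := by
    rw [hB_insert hn2]; rfl
  have h2 := gB_shift3 (u := 2 * i + 2) (T := (oddB n).erase (2 * i + 5)) ⟨i + 1, by ring⟩
    (by
      intro y hy
      rw [mem_erase, mem_oddB] at hy
      obtain ⟨a, j, b, rfl⟩ := hy
      exact ⟨⟨j, rfl⟩, a⟩)
    (by
      rw [mem_erase, mem_oddB]
      exact ⟨by omega, i + 1, by omega, by omega⟩)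
  rw [show 2 * i + 2 + 3 = 2 * i + 5 by ring] at h2
  have h3 : ((n ^ 2).factorial : ℚ) = (n : ℚ) ^ 2 * (n ^ 2 - 1) * (n ^ 2 - 2) * ((n ^ 2 - 3).factorial : ℚ) := by
    have h9 : 9 ≤ n ^ 2 := by nlinarith
    obtain ⟨q, hq⟩ : ∃ q, n ^ 2 = q + 3 := ⟨n ^ 2 - 3, by omega⟩
    have hq' : (n : ℚ) ^ 2 = q + 3 := by exact_mod_cast hq
    rw [hq', hq, Nat.add_sub_cancel, Nat.factorial_succ, Nat.factorial_succ, Nat.factorial_succ]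
    push_cast
    ring
  rw [c1, card_w0, h1, h2, h0, h3]
  unfold tauB
  ring

/-- For every `n ≥ 3`, with `W k = w_k ∈ Bₙ` for `1 ≤ k ≤ n - 2`,
`n(n² - 2) · Σ_{k=1}^{n-2} |R(w_k)| = (n - 2) · |R(w₀ᴮ)|`. -/
theorem sum_Rwk_card (n : ℕ) (hn : 3 ≤ n) (W : ℕ → Equiv.Perm ℤ)
    (hW : ∀ k, 1 ≤ k → k ≤ n - 2 → ∀ i : ℤ, W k i = wkFun n k i) :
    n * (n ^ 2 - 2) * ∑ k ∈ Finset.Icc 1 (n - 2), Nat.card ↥(RSet n (W k))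
      = (n - 2) * Nat.card ↥(RSet n (w0B n)) := by
  obtain ⟨m, rfl⟩ : ∃ m, n = m + 2 := ⟨n - 2, by omega⟩
  have hsum : ∑ k ∈ Finset.Icc 1 (m + 2 - 2), Nat.card ↥(RSet (m + 2) (W k)) =
      ∑ i ∈ range m, Nat.card ↥(RSet (m + 2) (W (i + 1))) := by
    rw [Nat.add_sub_cancel, range_eq_Ico, sum_Ico_add' (fun k => Nat.card ↥(RSet (m + 2) (W k))) 0 m 1]
    rfl
  rw [hsum]
  have htau := tauB_sum (m + 2)
  rw [sum_oddB, sum_range_succ', sum_range_succ'] at htau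
  simp only [mul_zero, zero_add, mul_one, Nat.reduceAdd, tauB_one, tauB_three, add_zero] at htau
  obtain ⟨A, hA⟩ : ∃ A : ℚ, A = (Nat.card ↥(RSet (m + 2) (w0B (m + 2))) : ℚ) := ⟨_, rfl⟩
  have hrat : (∑ i ∈ range m, (Nat.card ↥(RSet (m + 2) (W (i + 1))) : ℚ)) *
      (((m + 2 : ℕ) : ℚ) ^ 2 * (((m + 2 : ℕ) : ℚ) ^ 2 - 1) * (((m + 2 : ℕ) : ℚ) ^ 2 - 2)) =
      -A * ∑ i ∈ range m, tauB (m + 2) (2 * (i + 1 + 1) + 1) := by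
    rw [sum_mul, mul_sum]
    apply sum_congr rfl
    intro i hi
    rw [mem_range] at hi
    obtain ⟨t, rfl⟩ : ∃ t, m = i + 1 + t := ⟨m - i - 1, by omega⟩
    have := card_ratio (i := i) (t := t) (w := W (i + 1)) (n := i + 1 + t + 2) (by
      rw [show i + 3 + t = i + 1 + t + 2 by ring]
      exact hW (i + 1) (by omega) (by omega)) (by ring)
    rw [this, hA, show 2 * (i + 1 + 1) + 1 = 2 * i + 5 by ring]
  have hm0 : ((m : ℚ) + 2) * ((m + 2) ^ 2 - 1) ≠ 0 := by
    have h1 : ((m : ℚ) + 2) * ((m + 2) ^ 2 - 1) = (m + 2) * (m + 1) * (m + 3) := by ring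
    rw [h1]; positivity
  have h4 : 2 ≤ (m + 2) ^ 2 := by nlinarith
  have hq : (((m + 2) * ((m + 2) ^ 2 - 2) * ∑ i ∈ range m, Nat.card ↥(RSet (m + 2) (W (i + 1))) : ℕ) : ℚ)
      = (((m + 2 - 2) * Nat.card ↥(RSet (m + 2) (w0B (m + 2))) : ℕ) : ℚ) := by
    rw [Nat.add_sub_cancel, Nat.cast_mul, Nat.cast_mul, Nat.cast_sub h4, Nat.cast_mul, ← hA]
    push_cast at hrat htau ⊢
    apply mul_left_cancel₀ hm0
    linear_combination hrat - A * htau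
  exact_mod_cast hq
end
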